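/- (Kernel form of the integral star-triangle relation) Let p, q be complex numbers with 0 < |p| < 1, 0 < |q| < 1 and fix a square root √(pq). Let s, t, y, w, z be nonzero complex numbers satisfying |sw| < 1, |sw^{−1}| < 1, |tz| < 1, |tz^{−1}| < 1, |√(pq)(st)^{−1}y| < 1, |√(pq)(st)^{−1}y^{−1}| < 1. Then ((p;p)_∞(q;q)_∞/(4πi)) ∮_{|x|=1} [Γ(sw x;p,q)Γ(sw x^{−1};p,q)Γ(sw^{−1}x;p,q)Γ(sw^{−1}x^{−1};p,q) · Γ(√(pq)(st)^{−1}y^{±1}x^{±1};p,q) · Γ(tx z;p,q)Γ(tx z^{−1};p,q)Γ(tx^{−1}z;p,q)Γ(tx^{−1}z^{−1};p,q)] / [Γ(x²;p,q)Γ(x^{−2};p,q)] dx/x = [Γ(s²;p,q)Γ(t²;p,q)/Γ(s²t²;p,q)] · D(t;y,w) · Γ(st w^{±1} z^{±1};p,q) · D(s;y,z), where Γ(a x^{±1} u^{±1};p,q) denotes the product of the four elliptic gamma functions with all sign choices. -/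

import Mathlib

open Complex Real Filter Topology

/-- The infinite q-Pochhammer symbol (z;q)_inf. -/
noncomputable def qpoch (z q : ℂ) : ℂ := ∏' j : ℕ, (1 - z * q ^ j)

/-- The elliptic gamma function Γ(z;p,q). -/
noncomputable def egamma (z p q : ℂ) : ℂ :=
  ∏' jk : ℕ × ℕ, (1 - z⁻¹ * p ^ (jk.1 + 1) * q ^ (jk.2 + 1)) / (1 - z * p ^ jk.1 * q ^ jk.2)

/-- The short Jacobi theta function θ(z;p) (base first argument). -/
noncomputable def theta (p z : ℂ) : ℂ := qpoch z p * qpoch (p * z⁻¹) p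

/-- D(s;y,w) built from four elliptic gamma functions; `r` is a fixed square root of `p*q`. -/
noncomputable def Dfun (p q r s y w : ℂ) : ℂ :=
  egamma (r * s⁻¹ * y * w) p q * egamma (r * s⁻¹ * y * w⁻¹) p q *
    egamma (r * s⁻¹ * y⁻¹ * w) p q * egamma (r * s⁻¹ * y⁻¹ * w⁻¹) p q

/-- Γ(a u^{±1} v^{±1};p,q): the product of the four elliptic gamma functions. -/
noncomputable def gamma4 (p q a u v : ℂ) : ℂ :=
  egamma (a * u * v) p q * egamma (a * u * v⁻¹) p q *
    egamma (a * u⁻¹ * v) p q * egamma (a * u⁻¹ * v⁻¹) p q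

/-- The constant κ = (p;p)_∞ (q;q)_∞ / (4πi). -/
noncomputable def kappa (p q : ℂ) : ℂ := qpoch p p * qpoch q q / (4 * (Real.pi : ℂ) * Complex.I)

/-!
Write `I(t)` for the elliptic beta integral with six parameters in the unit disc, `∏ tᵢ = pq`. It
is proportional to `∏_{i<j} Γ(tᵢtⱼ; p, q)`, and the kernel form of the star-triangle relation is the
specialisation `t = (sw, s/w, ky, k/y, tz, t/z)` with `k = √(pq)/(st)`.

The difference of suitable multiples of the integrands with parameters `(qa, b, …)` and `(a, qb, …)`
is a sum `g(z) + g(1/z)` with `g` odd under `z ↦ 1/(qz)`, so its integral vanishes. Hence the ratio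
`I(t) / ∏ Γ(tᵢtⱼ)` is invariant under `(qa, b) ↦ (a, qb)`. Along `ab = const` this is periodicity
under `x ↦ qx` of a holomorphic function on an annulus. If `|ab| < |q|` the annulus contains a
fundamental domain, so by the maximum principle the ratio depends on `ab` only. Three such moves
bring the parameters to `(-iρ, iρ, abc/ρ², …)`. As `ρ → 1` poles pinch the contour at `±i`, the
integrand becomes a Poisson kernel in `z²`, and the limit gives the constant. The restriction
`|ab| < |q|` is removed by analytic continuation in the logarithms of the parameters.
-/

section

variable {p q : ℂ}

/-! ### Infinite products and the elliptic gamma function -/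

section ProductOneSub

variable {ι : Type*} {c : ι → ℂ}

lemma multipliable_one_sub_mul (hc : Summable fun i => ‖c i‖) (z : ℂ) :
    Multipliable fun i => 1 - z * c i := by
  simpa [sub_eq_add_neg] using
    multipliable_one_add_of_summable (f := fun i => -(z * c i)) (by simpa using hc.mul_left ‖z‖)

lemma tprod_one_sub_mul_ne_zero (hc : Summable fun i => ‖c i‖) {z : ℂ}
    (h : ∀ i, 1 - z * c i ≠ 0) : ∏' i, (1 - z * c i) ≠ 0 := by
  simpa [sub_eq_add_neg] using
    tprod_one_add_ne_zero_of_summable (f := fun i => -(z * c i))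
      (by simpa [sub_eq_add_neg] using h) (by simpa using hc.mul_left ‖z‖)

lemma differentiable_tprod_one_sub_mul (hc : Summable fun i => ‖c i‖) :
    Differentiable ℂ fun z => ∏' i, (1 - z * c i) := by
  intro z
  have hU : IsOpen (Metric.ball (0 : ℂ) (‖z‖ + 1)) := Metric.isOpen_ball
  have hbound : ∀ i, ∀ x ∈ Metric.ball (0 : ℂ) (‖z‖ + 1), ‖-(x * c i)‖ ≤ (‖z‖ + 1) * ‖c i‖ := by
    intro i x hx
    rw [norm_neg, norm_mul]
    have := (mem_ball_zero_iff.mp hx).le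
    gcongr
  have hprod := Summable.hasProdLocallyUniformlyOn_one_add (f := fun i x => -(x * c i)) hU
    (hc.mul_left (‖z‖ + 1)) (.of_forall hbound) fun i => by fun_prop
  have hdiff := hprod.differentiableOn (.of_forall fun _ => by
    simpa [Finset.prod_fn] using DifferentiableOn.finsetProd fun _ _ => by fun_prop) hU
  simpa [sub_eq_add_neg] using hdiff.differentiableAt (hU.mem_nhds (by simp))

end ProductOneSub

lemma norm_mul_lt_one {x y : ℂ} (hx : ‖x‖ < 1) (hy : ‖y‖ ≤ 1) : ‖x * y‖ < 1 := by
  rw [norm_mul]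
  exact mul_lt_one_of_nonneg_of_lt_one_left (norm_nonneg _) hx hy

lemma one_sub_ne_zero_of_norm_lt_one {x : ℂ} (hx : ‖x‖ < 1) : 1 - x ≠ 0 := by
  rw [sub_ne_zero]
  rintro rfl
  simp at hx

lemma tprod_one_sub_mul_ne_zero_of_norm_lt_one {ι : Type*} {c : ι → ℂ}
    (hc : Summable fun i => ‖c i‖) (hc1 : ∀ i, ‖c i‖ ≤ 1) {z : ℂ} (hz : ‖z‖ < 1) :
    ∏' i, (1 - z * c i) ≠ 0 :=
  tprod_one_sub_mul_ne_zero hc fun i =>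
    one_sub_ne_zero_of_norm_lt_one (norm_mul_lt_one hz (hc1 i))

section QPochhammer

lemma summable_norm_pow (hq : ‖q‖ < 1) : Summable fun j : ℕ => ‖q ^ j‖ := by
  simpa using summable_geometric_of_lt_one (norm_nonneg _) hq

lemma norm_pow_le_one (hq : ‖q‖ < 1) (j : ℕ) : ‖q ^ j‖ ≤ 1 := by
  rw [norm_pow]
  exact pow_le_one₀ (norm_nonneg _) hq.le

lemma differentiable_qpoch (hq : ‖q‖ < 1) : Differentiable ℂ fun z => qpoch z q :=
  differentiable_tprod_one_sub_mul (summable_norm_pow hq)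

lemma qpoch_ne_zero (hq : ‖q‖ < 1) {z : ℂ} (hz : ‖z‖ < 1) : qpoch z q ≠ 0 := by
  rw [qpoch]
  exact tprod_one_sub_mul_ne_zero_of_norm_lt_one (summable_norm_pow hq) (norm_pow_le_one hq) hz

lemma qpoch_eq_one_sub_mul (hq : ‖q‖ < 1) (z : ℂ) :
    qpoch z q = (1 - z) * qpoch (q * z) q := by
  have hshift : ∀ j : ℕ, 1 - q * z * q ^ j = 1 - z * q ^ (j + 1) := fun j => by ring
  have hmul := (multipliable_one_sub_mul (summable_norm_pow hq) (q * z)).congr hshift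
  rw [qpoch, tprod_eq_zero_mul' (f := fun j => 1 - z * q ^ j) hmul, qpoch]
  simp only [hshift, pow_zero, mul_one]

end QPochhammer

section DoublePochhammer

/-- The double `q`-Pochhammer symbol `(z;p,q)_∞ = ∏_{j,k≥0} (1 - z p^j q^k)`, an entire function of
`z` in terms of which `Γ(z;p,q) = (pq/z;p,q)_∞ / (z;p,q)_∞`. -/
noncomputable def doublePoch (p q z : ℂ) : ℂ :=
  ∏' jk : ℕ × ℕ, (1 - z * (p ^ jk.1 * q ^ jk.2))

lemma summable_norm_pow_mul_pow (hp : ‖p‖ < 1) (hq : ‖q‖ < 1) :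
    Summable fun jk : ℕ × ℕ => ‖p ^ jk.1 * q ^ jk.2‖ := by
  simpa using (summable_norm_pow hp).mul_of_nonneg (summable_norm_pow hq)
    (fun _ => norm_nonneg _) fun _ => norm_nonneg _

lemma doublePoch_comm (p q z : ℂ) : doublePoch p q z = doublePoch q p z := by
  rw [doublePoch, ← (Equiv.prodComm ℕ ℕ).tprod_eq]
  simp [doublePoch, mul_comm]

variable (hp : ‖p‖ < 1) (hq : ‖q‖ < 1)
include hp hq

lemma differentiable_doublePoch : Differentiable ℂ (doublePoch p q) :=
  differentiable_tprod_one_sub_mul (summable_norm_pow_mul_pow hp hq)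

lemma doublePoch_ne_zero {z : ℂ} (hz : ‖z‖ < 1) : doublePoch p q z ≠ 0 := by
  refine tprod_one_sub_mul_ne_zero_of_norm_lt_one (summable_norm_pow_mul_pow hp hq) ?_ hz
  intro jk
  rw [norm_mul]
  exact mul_le_one₀ (norm_pow_le_one hp _) (norm_nonneg _) (norm_pow_le_one hq _)

lemma hasProd_qpoch (z : ℂ) :
    HasProd (fun j : ℕ => qpoch (z * p ^ j) q) (doublePoch p q z) := by
  refine (multipliable_one_sub_mul (summable_norm_pow_mul_pow hp hq) z).hasProd.prod_fiberwise
    fun j => ?_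
  simpa [qpoch, mul_assoc] using
    (multipliable_one_sub_mul (summable_norm_pow hq) (z * p ^ j)).hasProd

lemma doublePoch_eq_qpoch_right_mul (z : ℂ) :
    doublePoch p q z = qpoch z q * doublePoch p q (p * z) := by
  have hshift : ∀ j : ℕ, qpoch (p * z * p ^ j) q = qpoch (z * p ^ (j + 1)) q := fun j => by
    congr 1; ring
  have hz := hasProd_qpoch hp hq (p * z)
  rw [← (hasProd_qpoch hp hq z).tprod_eq, ← hz.tprod_eq,
    tprod_eq_zero_mul' (hz.multipliable.congr hshift)]
  simp only [hshift, pow_zero, mul_one]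

lemma doublePoch_eq_qpoch_left_mul (z : ℂ) :
    doublePoch p q z = qpoch z p * doublePoch p q (q * z) := by
  rw [doublePoch_comm, doublePoch_eq_qpoch_right_mul hq hp, doublePoch_comm q p]

end DoublePochhammer

section EllipticGamma

variable (hp : ‖p‖ < 1) (hq : ‖q‖ < 1)
include hp hq

lemma egamma_eq_div (z : ℂ) :
    egamma z p q = doublePoch p q (p * q * z⁻¹) / doublePoch p q z := by
  have hsum := summable_norm_pow_mul_pow hp hq
  have hnum : ∀ jk : ℕ × ℕ, 1 - z⁻¹ * p ^ (jk.1 + 1) * q ^ (jk.2 + 1) =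
      1 - p * q * z⁻¹ * (p ^ jk.1 * q ^ jk.2) := fun jk => by ring
  simp only [egamma, hnum, mul_assoc z]
  by_cases h : ∀ jk : ℕ × ℕ, 1 - z * (p ^ jk.1 * q ^ jk.2) ≠ 0
  · refine HasProd.tprod_eq (Tendsto.congr (fun s => ?_)
      (Tendsto.div (multipliable_one_sub_mul hsum (p * q * z⁻¹)).hasProd
        (multipliable_one_sub_mul hsum z).hasProd (tprod_one_sub_mul_ne_zero hsum h)))
    simp only [Pi.div_apply, Finset.prod_div_distrib]
  · push Not at h
    obtain ⟨jk, hjk⟩ := h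
    rw [show doublePoch p q z = 0 from tprod_of_exists_eq_zero ⟨jk, hjk⟩, div_zero]
    exact tprod_of_exists_eq_zero ⟨jk, by rw [hjk, div_zero]⟩

lemma differentiableAt_egamma {z : ℂ} (hz0 : z ≠ 0) (hz : ‖z‖ < 1) :
    DifferentiableAt ℂ (fun z => egamma z p q) z := by
  simp only [egamma_eq_div hp hq]
  refine DifferentiableAt.div ?_ (differentiable_doublePoch hp hq z) (doublePoch_ne_zero hp hq hz)
  exact (differentiable_doublePoch hp hq _).comp z (by fun_prop (disch := assumption))

lemma egamma_ne_zero {z : ℂ} (hz : ‖z‖ < 1) (hpq : ‖p * q‖ < ‖z‖) : egamma z p q ≠ 0 := by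
  rw [egamma_eq_div hp hq]
  refine div_ne_zero (doublePoch_ne_zero hp hq ?_) (doublePoch_ne_zero hp hq hz)
  rwa [← div_eq_mul_inv, norm_div, div_lt_one ((norm_nonneg _).trans_lt hpq)]

lemma egamma_mul_egamma_of_mul_eq {z w : ℂ} (hz : ‖z‖ < 1) (hw : ‖w‖ < 1) (hz0 : z ≠ 0)
    (hw0 : w ≠ 0) (h : z * w = p * q) : egamma z p q * egamma w p q = 1 := by
  have hz' := doublePoch_ne_zero hp hq hz
  have hw' := doublePoch_ne_zero hp hq hw
  rw [egamma_eq_div hp hq, egamma_eq_div hp hq, ← h, mul_inv_cancel_right₀ hw0,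
    mul_comm z w, mul_inv_cancel_right₀ hz0]
  field_simp

lemma egamma_mul_left (hq0 : q ≠ 0) {z : ℂ} (hz : ‖z‖ < 1) :
    egamma (q * z) p q = theta p z * egamma z p q := by
  have hqz : doublePoch p q (q * z) ≠ 0 :=
    doublePoch_ne_zero hp hq (norm_mul_lt_one hq hz.le)
  have hz' := qpoch_ne_zero hp hz
  rw [egamma_eq_div hp hq, egamma_eq_div hp hq, theta,
    show p * q * (q * z)⁻¹ = p * z⁻¹ by field_simp, show p * q * z⁻¹ = q * (p * z⁻¹) by ring,
    doublePoch_eq_qpoch_left_mul hp hq z, doublePoch_eq_qpoch_left_mul hp hq (p * z⁻¹)]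
  field_simp [hqz, hz']

end EllipticGamma

section EllipticGammaReg

/-- The elliptic gamma function with its pole at `1` removed: `Γ(z;p,q) = egammaReg p q z / (1-z)`.
It is continuous on the punctured closed unit disc. -/
noncomputable def egammaReg (p q z : ℂ) : ℂ :=
  doublePoch p q (p * q * z⁻¹) / (qpoch (p * z) p * doublePoch p q (q * z))

variable (hp : ‖p‖ < 1) (hq : ‖q‖ < 1)
include hp hq

lemma egamma_eq_egammaReg_div (z : ℂ) : egamma z p q = egammaReg p q z / (1 - z) := by
  rw [egamma_eq_div hp hq, egammaReg, div_div, doublePoch_eq_qpoch_left_mul hp hq z,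
    qpoch_eq_one_sub_mul hp]
  ring

lemma continuousAt_egammaReg {z : ℂ} (hz0 : z ≠ 0) (hz : ‖z‖ ≤ 1) :
    ContinuousAt (egammaReg p q) z := by
  have hdbl : Continuous (doublePoch p q) := (differentiable_doublePoch hp hq).continuous
  have hpoch : Continuous fun z => qpoch z p := (differentiable_qpoch hp).continuous
  refine ContinuousAt.div (hdbl.continuousAt.comp (by fun_prop (disch := assumption)))
    (by fun_prop) (mul_ne_zero (qpoch_ne_zero hp (norm_mul_lt_one hp hz)) ?_)
  exact doublePoch_ne_zero hp hq (norm_mul_lt_one hq hz)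

lemma egammaReg_mul_qpoch_of_inv_eq {z : ℂ} (hinv : z⁻¹ = z) (hz : ‖z‖ ≤ 1) :
    egammaReg p q z * (qpoch (p * z) p * qpoch (q * z) q) = 1 := by
  have hpz := qpoch_ne_zero hp (norm_mul_lt_one hp hz)
  have hqz := qpoch_ne_zero hq (norm_mul_lt_one hq hz)
  have hpqz := doublePoch_ne_zero hp hq (norm_mul_lt_one (norm_mul_lt_one hp hq.le) hz)
  rw [egammaReg, hinv, doublePoch_eq_qpoch_right_mul hp hq (q * z), ← mul_assoc p q z]
  field_simp [hpz, hqz, hpqz]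

end EllipticGammaReg

/-! ### The theta function -/

section Theta

lemma theta_one (hp : ‖p‖ < 1) : theta p 1 = 0 := by
  rw [theta, qpoch_eq_one_sub_mul hp, sub_self, zero_mul, zero_mul]

lemma theta_neg_one (hp : ‖p‖ < 1) : theta p (-1) = 2 * qpoch (p * -1) p ^ 2 := by
  rw [theta, qpoch_eq_one_sub_mul hp (-1), inv_neg_one]
  ring

lemma differentiableAt_theta (hp : ‖p‖ < 1) {z : ℂ} (hz : z ≠ 0) :
    DifferentiableAt ℂ (theta p) z :=
  (differentiable_qpoch hp z).mul <|
    (differentiable_qpoch hp _).comp z (f := fun z => p * z⁻¹)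
      (by fun_prop (disch := assumption))

lemma theta_mul_left (hp : ‖p‖ < 1) (hp0 : p ≠ 0) {z : ℂ} (hz : z ≠ 0) :
    theta p (p * z) = -z⁻¹ * theta p z := by
  rw [theta, theta, show p * (p * z)⁻¹ = z⁻¹ by field_simp, qpoch_eq_one_sub_mul hp z,
    qpoch_eq_one_sub_mul hp z⁻¹]
  field_simp
  ring

lemma theta_inv (hp : ‖p‖ < 1) {z : ℂ} (hz : z ≠ 0) : theta p z⁻¹ = -z⁻¹ * theta p z := by
  rw [theta, theta, inv_inv, qpoch_eq_one_sub_mul hp z, qpoch_eq_one_sub_mul hp z⁻¹]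
  field_simp
  ring

lemma theta_mul_inv (hp0 : p ≠ 0) (z : ℂ) : theta p (p * z⁻¹) = theta p z := by
  rw [theta, theta, mul_inv, inv_inv, mul_inv_cancel_left₀ hp0, mul_comm]

lemma theta_ne_zero (hp : ‖p‖ < 1) {z : ℂ} (hz : ‖z‖ < 1) (hpz : ‖p‖ < ‖z‖) :
    theta p z ≠ 0 := by
  refine mul_ne_zero (qpoch_ne_zero hp hz) (qpoch_ne_zero hp ?_)
  rwa [← div_eq_mul_inv, norm_div, div_lt_one ((norm_nonneg _).trans_lt hpz)]

end Theta

section ThetaZeros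

lemma exists_mul_pow_eq_one_of_qpoch_eq_zero (hq : ‖q‖ < 1) {z : ℂ} (h : qpoch z q = 0) :
    ∃ j : ℕ, z * q ^ j = 1 := by
  contrapose! h
  exact tprod_one_sub_mul_ne_zero (summable_norm_pow hq) fun j => sub_ne_zero.2 (h j).symm

lemma exists_zpow_eq_of_theta_eq_zero (hp : ‖p‖ < 1) {x : ℂ} (h : theta p x = 0) :
    ∃ n : ℤ, p ^ n = x := by
  rcases mul_eq_zero.1 h with h | h
  · obtain ⟨j, hj⟩ := exists_mul_pow_eq_one_of_qpoch_eq_zero hp h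
    exact ⟨-j, by rw [zpow_neg, zpow_natCast, ← eq_inv_of_mul_eq_one_left hj]⟩
  · obtain ⟨j, hj⟩ := exists_mul_pow_eq_one_of_qpoch_eq_zero hp h
    refine ⟨(j + 1 : ℕ), ?_⟩
    rw [mul_right_comm] at hj
    rw [zpow_natCast, pow_succ', eq_inv_of_mul_eq_one_left hj, inv_inv]

lemma zpow_mul_iff_of_forall_mul_iff {P : ℂ → Prop} (hp0 : p ≠ 0)
    (hP : ∀ x ≠ 0, P (p * x) ↔ P x) (n : ℤ) {x : ℂ} (hx : x ≠ 0) : P (p ^ n * x) ↔ P x := by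
  induction n using Int.induction_on with
  | zero => simp
  | succ n ih =>
    rwa [zpow_add_one₀ hp0, mul_comm _ p, mul_assoc, hP _ (mul_ne_zero (zpow_ne_zero _ hp0) hx)]
  | pred n ih =>
    rwa [← hP _ (mul_ne_zero (zpow_ne_zero _ hp0) hx), ← mul_assoc, ← zpow_one_add₀ hp0,
      add_sub_cancel]

lemma theta_eq_one_sub_mul (hp : ‖p‖ < 1) (z : ℂ) :
    theta p z = (1 - z) * (qpoch (p * z) p * qpoch (p * z⁻¹) p) := by
  rw [theta, qpoch_eq_one_sub_mul hp z, mul_assoc]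

lemma deriv_theta_one_ne_zero (hp : ‖p‖ < 1) : deriv (theta p) 1 ≠ 0 := by
  have hd : DifferentiableAt ℂ (fun z => qpoch (p * z) p * qpoch (p * z⁻¹) p) 1 :=
    ((differentiable_qpoch hp _).comp (1 : ℂ) (f := fun z => p * z) (by fun_prop)).mul
      ((differentiable_qpoch hp _).comp (1 : ℂ) (f := fun z => p * z⁻¹)
        (by fun_prop (disch := simp)))
  have hderiv := (((hasDerivAt_id (1 : ℂ)).const_sub 1).mul hd.hasDerivAt).congr_of_eventuallyEq
    (.of_forall (theta_eq_one_sub_mul hp))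
  simp [hderiv.deriv, qpoch_ne_zero hp hp]

lemma theta_mul_left_eq_zero_iff (hp : ‖p‖ < 1) (hp0 : p ≠ 0) {x : ℂ} (hx : x ≠ 0) :
    theta p (p * x) = 0 ↔ theta p x = 0 := by
  simp [theta_mul_left hp hp0 hx, hx]

lemma deriv_theta_mul_left (hp : ‖p‖ < 1) (hp0 : p ≠ 0) {x : ℂ} (hx : x ≠ 0)
    (h : theta p x = 0) : deriv (theta p) (p * x) * p = -x⁻¹ * deriv (theta p) x := by
  have hleft : HasDerivAt (fun z => theta p (p * z)) (deriv (theta p) (p * x) * p) x :=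
    (differentiableAt_theta hp (mul_ne_zero hp0 hx)).hasDerivAt.comp x
      (by simpa using (hasDerivAt_id x).const_mul p)
  have hright := (hasDerivAt_inv hx).neg.mul (differentiableAt_theta hp hx).hasDerivAt
  have heq : (fun z => theta p (p * z)) =ᶠ[𝓝 x] fun z => -z⁻¹ * theta p z :=
    (eventually_ne_nhds hx).mono fun z hz => theta_mul_left hp hp0 hz
  simpa [h] using hleft.unique (hright.congr_of_eventuallyEq heq)

lemma deriv_theta_ne_zero (hp : ‖p‖ < 1) (hp0 : p ≠ 0) {x : ℂ} (h : theta p x = 0) :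
    deriv (theta p) x ≠ 0 := by
  obtain ⟨n, rfl⟩ := exists_zpow_eq_of_theta_eq_zero hp h
  rw [← mul_one (p ^ n)]
  refine ((zpow_mul_iff_of_forall_mul_iff (P := fun x => theta p x = 0 ∧ deriv (theta p) x ≠ 0) hp0
    (fun x hx => ?_) n one_ne_zero).2 ⟨theta_one hp, deriv_theta_one_ne_zero hp⟩).2
  rw [theta_mul_left_eq_zero_iff hp hp0 hx]
  refine and_congr_right fun h0 => ?_
  have hderiv := deriv_theta_mul_left hp hp0 hx h0
  rw [← mul_ne_zero_iff_right hp0, hderiv]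
  simp [hx]

lemma theta_eq_zero_iff (hp : ‖p‖ < 1) (hp0 : p ≠ 0) {x : ℂ} :
    theta p x = 0 ↔ ∃ n : ℤ, p ^ n = x := by
  refine ⟨exists_zpow_eq_of_theta_eq_zero hp, ?_⟩
  rintro ⟨n, rfl⟩
  simpa [theta_one hp] using zpow_mul_iff_of_forall_mul_iff (P := fun x => theta p x = 0) hp0
    (fun x hx => theta_mul_left_eq_zero_iff hp hp0 hx) n one_ne_zero

lemma theta_mul_eq_zero (hp : ‖p‖ < 1) (hp0 : p ≠ 0) {x y : ℂ} (hx : theta p x = 0)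
    (hy : theta p y = 0) : theta p (x * y) = 0 := by
  rw [theta_eq_zero_iff hp hp0] at *
  obtain ⟨n, rfl⟩ := hx
  obtain ⟨m, rfl⟩ := hy
  exact ⟨n + m, zpow_add₀ hp0 n m⟩

lemma theta_inv_eq_zero_iff (hp : ‖p‖ < 1) {x : ℂ} (hx : x ≠ 0) :
    theta p x⁻¹ = 0 ↔ theta p x = 0 := by
  simp [theta_inv hp hx, hx]

end ThetaZeros

/-! ### Holomorphic functions on annuli and on the punctured plane -/

section Annulus

/-- The open annulus `a < ‖x‖ < b` in `ℂ`, the domain on which multiplicatively periodic functions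
are compared. -/
def openAnnulus (a b : ℝ) : Set ℂ := {x | a < ‖x‖ ∧ ‖x‖ < b}

variable {a b : ℝ}

lemma isOpen_openAnnulus (a b : ℝ) : IsOpen (openAnnulus a b) :=
  (isOpen_lt continuous_const continuous_norm).inter (isOpen_lt continuous_norm continuous_const)

lemma isPreconnected_openAnnulus (ha : 0 < a) (hb : 0 < b) :
    IsPreconnected (openAnnulus a b) := by
  have himage :
      openAnnulus a b = Complex.exp '' {l : ℂ | Real.log a < l.re ∧ l.re < Real.log b} := by
    ext x
    constructor
    · rintro ⟨hax, hxb⟩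
      have hx : 0 < ‖x‖ := ha.trans hax
      refine ⟨log x, ?_, exp_log (norm_pos_iff.1 hx)⟩
      rw [Set.mem_ofPred_eq, log_re]
      exact ⟨Real.log_lt_log ha hax, Real.log_lt_log hx hxb⟩
    · rintro ⟨l, ⟨hal, hlb⟩, rfl⟩
      rw [openAnnulus, Set.mem_ofPred_eq, norm_exp]
      exact ⟨(Real.log_lt_iff_lt_exp ha).1 hal, (Real.lt_log_iff_exp_lt hb).1 hlb⟩
  rw [himage]
  exact ((convex_halfSpace_re_gt _).inter (convex_halfSpace_re_lt _)).isPreconnected.image _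
    Complex.continuous_exp.continuousOn

lemma isCompact_setOf_norm_mem_Icc (a b : ℝ) : IsCompact {x : ℂ | a ≤ ‖x‖ ∧ ‖x‖ ≤ b} := by
  refine (isCompact_closedBall (0 : ℂ) b).of_isClosed_subset ?_ fun x hx => ?_
  · exact (isClosed_le continuous_const continuous_norm).inter
      (isClosed_le continuous_norm continuous_const)
  · simpa using hx.2

variable {f : ℂ → ℂ}

lemma exists_apply_eq_of_mul_periodic (hq0 : 0 < ‖q‖) {R : ℝ} (haR : a < ‖q‖ * R) (hRb : R < b)
    (hper : ∀ x, a < ‖q * x‖ → ‖x‖ < b → f (q * x) = f x) {y : ℂ} (hy : y ∈ openAnnulus a b)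
    (hqy : ‖q‖ * (‖q‖ * R) < ‖y‖) (hyR : ‖q‖ * ‖y‖ < R) :
    ∃ z, (‖q‖ * R ≤ ‖z‖ ∧ ‖z‖ ≤ R) ∧ f z = f y := by
  rcases lt_or_ge ‖y‖ (‖q‖ * R) with hlow | hlow
  · have hcancel : q * (q⁻¹ * y) = y := mul_inv_cancel_left₀ (norm_pos_iff.1 hq0) y
    have hnorm : ‖y‖ = ‖q‖ * ‖q⁻¹ * y‖ := by rw [← norm_mul, hcancel]
    have hlo : ‖q‖ * R ≤ ‖q⁻¹ * y‖ :=
      le_of_mul_le_mul_left (hnorm ▸ hqy.le) hq0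
    have hhi : ‖q⁻¹ * y‖ ≤ R := le_of_mul_le_mul_left (hnorm ▸ hlow.le) hq0
    refine ⟨q⁻¹ * y, ⟨hlo, hhi⟩, ?_⟩
    rw [← hper _ (by rw [hcancel]; exact hy.1) (hhi.trans_lt hRb), hcancel]
  · rcases le_or_gt ‖y‖ R with hhigh | hhigh
    · exact ⟨y, ⟨hlow, hhigh⟩, rfl⟩
    · have hlo : ‖q‖ * R ≤ ‖q * y‖ := by rw [norm_mul]; gcongr
      exact ⟨q * y, ⟨hlo, (norm_mul q y).trans_le hyR.le⟩, hper y (haR.trans_le hlo) hy.2⟩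

theorem apply_eq_of_mul_periodic_openAnnulus (hq0 : 0 < ‖q‖) (hq : ‖q‖ < 1) (ha : 0 < a)
    (hab : a < ‖q‖ * b) (hf : DifferentiableOn ℂ f (openAnnulus a b))
    (hper : ∀ x, a < ‖q * x‖ → ‖x‖ < b → f (q * x) = f x) {x y : ℂ} (hx : x ∈ openAnnulus a b)
    (hy : y ∈ openAnnulus a b) : f x = f y := by
  obtain ⟨R, haR, hRb⟩ : ∃ R, a / ‖q‖ < R ∧ R < b := exists_between ((div_lt_iff₀' hq0).2 hab)
  have hR : 0 < R := (by positivity : 0 < a / ‖q‖).trans haR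
  have hqR : ‖q‖ * R < R := mul_lt_of_lt_one_left hR hq
  rw [div_lt_iff₀' hq0] at haR
  have hsub : {x : ℂ | ‖q‖ * R ≤ ‖x‖ ∧ ‖x‖ ≤ R} ⊆ openAnnulus a b :=
    fun x hx => ⟨haR.trans_le hx.1, hx.2.trans_lt hRb⟩
  obtain ⟨x₀, hx₀, hmax⟩ := (isCompact_setOf_norm_mem_Icc (‖q‖ * R) R).exists_isMaxOn
    ⟨(R : ℂ), by simpa [abs_of_pos hR] using hqR.le⟩ (hf.mono hsub).continuousOn.norm
  have hann : ∀ᶠ y in 𝓝 x₀, y ∈ openAnnulus a b := (isOpen_openAnnulus a b).mem_nhds (hsub hx₀)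
  have hloc : ∀ᶠ y in 𝓝 x₀, ‖f y‖ ≤ ‖f x₀‖ := by
    have hlow : ‖q‖ * (‖q‖ * R) < ‖x₀‖ :=
      (mul_lt_of_lt_one_left (by positivity) hq).trans_le hx₀.1
    have hhigh : ‖q‖ * ‖x₀‖ < R := (mul_le_mul_of_nonneg_left hx₀.2 hq0.le).trans_lt hqR
    filter_upwards [hann, continuous_norm.continuousAt.eventually_const_lt hlow,
      (continuous_norm.const_mul ‖q‖).continuousAt.eventually_lt_const hhigh] with y hy hqy hyR
    obtain ⟨z, hz, hzy⟩ := exists_apply_eq_of_mul_periodic hq0 haR hRb hper hy hqy hyR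
    exact hzy ▸ hmax hz
  have hconst := Complex.eventually_eq_of_isLocalMax_norm
    (hann.mono fun z hz => hf.differentiableAt ((isOpen_openAnnulus a b).mem_nhds hz)) hloc
  have heqOn := (hf.analyticOnNhd (isOpen_openAnnulus a b)).eqOn_of_preconnected_of_eventuallyEq
    (g := fun _ => f x₀) analyticOnNhd_const (isPreconnected_openAnnulus ha (hR.trans hRb))
    (hsub hx₀) hconst
  rw [heqOn hx, heqOn hy]

end Annulus

section PuncturedPlane

variable {f g : ℂ → ℂ}

lemma eq_zero_of_mul_eq_zero_of_ne_zero (hf : DifferentiableOn ℂ f {0}ᶜ)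
    (hg : DifferentiableOn ℂ g {0}ᶜ) (h : ∀ x ≠ 0, f x * g x = 0) {x₁ : ℂ} (hx₁ : x₁ ≠ 0)
    (hgx₁ : g x₁ ≠ 0) : ∀ x ≠ 0, f x = 0 := by
  have hconn : IsPreconnected ({0}ᶜ : Set ℂ) :=
    (isConnected_compl_singleton_of_one_lt_rank (by simp) (0 : ℂ)).isPreconnected
  exact (AnalyticOnNhd.eq_zero_or_eq_zero_of_mul_eq_zero
    (hf.analyticOnNhd isOpen_compl_singleton) (hg.analyticOnNhd isOpen_compl_singleton) h
    hconn).resolve_right fun h0 => hgx₁ (h0 x₁ hx₁)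

theorem apply_eq_of_mul_periodic (hq0 : 0 < ‖q‖) (hq : ‖q‖ < 1) (hf : DifferentiableOn ℂ f {0}ᶜ)
    (hper : ∀ x ≠ 0, f (q * x) = f x) {x y : ℂ} (hx : x ≠ 0) (hy : y ≠ 0) : f x = f y := by
  have hx' : 0 < ‖x‖ := norm_pos_iff.2 hx
  have hy' : 0 < ‖y‖ := norm_pos_iff.2 hy
  obtain ⟨a, ha, haxy⟩ := exists_between (lt_min hx' hy')
  obtain ⟨hax, hay⟩ := lt_min_iff.1 haxy
  have hlt : ∀ z : ℂ, a < ‖z‖ → z ≠ 0 := fun z hz => norm_pos_iff.1 (ha.trans hz)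
  refine apply_eq_of_mul_periodic_openAnnulus hq0 hq ha (b := (‖x‖ + ‖y‖) / ‖q‖) ?_
    (hf.mono fun z hz => hlt z hz.1) (fun z hz _ => hper z (right_ne_zero_of_mul (hlt _ hz)))
    ⟨hax, ?_⟩ ⟨hay, ?_⟩
  · rw [mul_div_cancel₀ _ hq0.ne']
    linarith
  · rw [lt_div_iff₀ hq0]
    nlinarith
  · rw [lt_div_iff₀ hq0]
    nlinarith

lemma differentiableAt_div_of_eq_zero {x : ℂ} (hf : ∀ᶠ y in 𝓝 x, DifferentiableAt ℂ f y)
    (hg : ∀ᶠ y in 𝓝 x, DifferentiableAt ℂ g y) (hfx : f x = 0) (hgx : g x = 0)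
    (hderiv : deriv g x ≠ 0) :
    DifferentiableAt ℂ (fun y => if g y = 0 then deriv f y / deriv g y else f y / g y) x := by
  have hdslope : ∀ {h : ℂ → ℂ}, (∀ᶠ y in 𝓝 x, DifferentiableAt ℂ h y) →
      DifferentiableAt ℂ (dslope h x) x := fun {h} hh => by
    obtain ⟨U, hU, hhU⟩ := hh.exists_mem
    exact ((Complex.differentiableOn_dslope hU).2 fun y hy =>
      (hhU y hy).differentiableWithinAt).differentiableAt hU
  have hgslope : dslope g x x ≠ 0 := by rwa [dslope_same]
  refine ((hdslope hf).div (hdslope hg) hgslope).congr_of_eventuallyEq ?_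
  filter_upwards [(hdslope hg).continuousAt.eventually_ne hgslope] with y hy
  rcases eq_or_ne y x with rfl | hyx
  · simp [hgx, dslope_same]
  · rw [dslope_of_ne _ hyx, slope_def_field, hgx, sub_zero] at hy
    have hgy : g y ≠ 0 := fun h0 => hy (by rw [h0, zero_div])
    simp only [Pi.div_apply, if_neg hgy, dslope_of_ne _ hyx, slope_def_field, hfx, hgx, sub_zero]
    rw [div_div_div_cancel_right₀ (sub_ne_zero.2 hyx)]

theorem exists_eq_mul_of_forall_eq_zero (hf : DifferentiableOn ℂ f {0}ᶜ)
    (hg : DifferentiableOn ℂ g {0}ᶜ) (hfg : ∀ x ≠ 0, g x = 0 → f x = 0)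
    (hderiv : ∀ x ≠ 0, g x = 0 → deriv g x ≠ 0) :
    ∃ k : ℂ → ℂ, DifferentiableOn ℂ k {0}ᶜ ∧ ∀ x ≠ 0, f x = g x * k x := by
  refine ⟨fun x => if g x = 0 then deriv f x / deriv g x else f x / g x, fun x hx => ?_,
    fun x hx => ?_⟩
  · have hat : ∀ {h : ℂ → ℂ}, DifferentiableOn ℂ h {0}ᶜ → ∀ᶠ y in 𝓝 x, DifferentiableAt ℂ h y :=
      fun hh => (eventually_ne_nhds hx).mono fun y hy =>
        hh.differentiableAt (isOpen_compl_singleton.mem_nhds hy)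
    refine DifferentiableAt.differentiableWithinAt ?_
    by_cases hgx : g x = 0
    · exact differentiableAt_div_of_eq_zero (hat hf) (hat hg) (hfg x hx hgx) hgx (hderiv x hx hgx)
    · refine ((hat hf).self_of_nhds.div (hat hg).self_of_nhds hgx).congr_of_eventuallyEq ?_
      filter_upwards [(hat hg).self_of_nhds.continuousAt.eventually_ne hgx] with y hy
      simp [hy]
  · by_cases hgx : g x = 0
    · simp [hgx, hfg x hx hgx]
    · simp [hgx, mul_div_cancel₀]

theorem exists_eq_theta_comp_mul (hp : ‖p‖ < 1) (hp0 : p ≠ 0) {φ : ℂ → ℂ}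
    (hφ : DifferentiableOn ℂ φ {0}ᶜ) (hφ0 : ∀ x ≠ 0, φ x ≠ 0) (hφ' : ∀ x ≠ 0, deriv φ x ≠ 0)
    (hf : DifferentiableOn ℂ f {0}ᶜ) (hfφ : ∀ x ≠ 0, theta p (φ x) = 0 → f x = 0) :
    ∃ k : ℂ → ℂ, DifferentiableOn ℂ k {0}ᶜ ∧ ∀ x ≠ 0, f x = theta p (φ x) * k x := by
  have hφat : ∀ x ≠ 0, DifferentiableAt ℂ φ x := fun x hx =>
    hφ.differentiableAt (isOpen_compl_singleton.mem_nhds hx)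
  refine exists_eq_mul_of_forall_eq_zero hf
    (fun x hx => ((differentiableAt_theta hp (hφ0 x hx)).comp x
      (hφat x hx)).differentiableWithinAt) hfφ fun x hx h0 => ?_
  change deriv (theta p ∘ φ) x ≠ 0
  rw [deriv_comp x (differentiableAt_theta hp (hφ0 x hx)) (hφat x hx)]
  exact mul_ne_zero (deriv_theta_ne_zero hp hp0 h0) (hφ' x hx)

end PuncturedPlane

/-! ### A theta function identity -/

section ThetaSymmetry

lemma differentiableAt_theta_comp (hp : ‖p‖ < 1) {φ : ℂ → ℂ} {x : ℂ} (hφ : DifferentiableAt ℂ φ x)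
    (hx : φ x ≠ 0) : DifferentiableAt ℂ (fun x => theta p (φ x)) x :=
  (differentiableAt_theta hp hx).comp x hφ

lemma theta_mul_mul_left (hp : ‖p‖ < 1) (hp0 : p ≠ 0) {a z : ℂ} (ha : a ≠ 0) (hz : z ≠ 0) :
    theta p (a * (p * z)) = -(a * z)⁻¹ * theta p (a * z) := by
  rw [← theta_mul_left hp hp0 (mul_ne_zero ha hz), mul_left_comm]

lemma theta_mul_inv_mul_left (hp : ‖p‖ < 1) (hp0 : p ≠ 0) {a z : ℂ} (ha : a ≠ 0) (hz : z ≠ 0) :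
    theta p (a * (p * z)⁻¹) = -(a * p⁻¹ * z⁻¹) * theta p (a * z⁻¹) := by
  have h := theta_mul_left hp hp0 (z := a * (p * z)⁻¹) (by positivity)
  rw [show p * (a * (p * z)⁻¹) = a * z⁻¹ by field_simp] at h
  rw [h]
  field_simp

lemma theta_sq_mul_left (hp : ‖p‖ < 1) (hp0 : p ≠ 0) {z : ℂ} (hz : z ≠ 0) :
    theta p ((p * z) ^ 2) = p⁻¹ * (z ^ 4)⁻¹ * theta p (z ^ 2) := by
  rw [show (p * z) ^ 2 = p * (p * z ^ 2) by ring, theta_mul_left hp hp0 (by positivity),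
    theta_mul_left hp hp0 (by positivity)]
  field_simp

/-- The symmetric product `θ(az;p) θ(a/z;p)`. -/
noncomputable def thetaPair (p a z : ℂ) : ℂ := theta p (a * z) * theta p (a * z⁻¹)

lemma thetaPair_inv (p a z : ℂ) : thetaPair p a z⁻¹ = thetaPair p a z := by
  rw [thetaPair, thetaPair, inv_inv, mul_comm]

lemma thetaPair_mul_left (hp : ‖p‖ < 1) (hp0 : p ≠ 0) {a z : ℂ} (ha : a ≠ 0) (hz : z ≠ 0) :
    thetaPair p a (p * z) = p⁻¹ * (z ^ 2)⁻¹ * thetaPair p a z := by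
  rw [thetaPair, theta_mul_mul_left hp hp0 ha hz, theta_mul_inv_mul_left hp hp0 ha hz, thetaPair]
  field_simp

lemma differentiableAt_thetaPair (hp : ‖p‖ < 1) {a z : ℂ} (ha : a ≠ 0) (hz : z ≠ 0) :
    DifferentiableAt ℂ (thetaPair p a) z :=
  (differentiableAt_theta_comp hp (by fun_prop) (by positivity)).mul
    (differentiableAt_theta_comp hp (by fun_prop (disch := assumption)) (by positivity))

lemma theta_mul_ne_zero_of_theta_sq_ne_zero (hp : ‖p‖ < 1) (hp0 : p ≠ 0) {a z : ℂ} (hz : z ≠ 0)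
    (haa : theta p (a ^ 2) ≠ 0) (h : theta p (a * z) = 0) :
    theta p (z ^ 2) ≠ 0 ∧ theta p (a * z⁻¹) ≠ 0 := by
  refine ⟨fun hsq => haa ?_, fun hinv => haa ?_⟩
  · rw [← theta_inv_eq_zero_iff hp (by positivity)] at hsq
    have := theta_mul_eq_zero hp hp0 (theta_mul_eq_zero hp hp0 h h) hsq
    rwa [show a * z * (a * z) * (z ^ 2)⁻¹ = a ^ 2 by field_simp] at this
  · have := theta_mul_eq_zero hp hp0 h hinv
    rwa [show a * z * (a * z⁻¹) = a ^ 2 by field_simp] at this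

variable {f : ℂ → ℂ}

lemma eq_zero_of_theta_mul_inv_eq_zero (hp : ‖p‖ < 1) (hp0 : p ≠ 0)
    (hf : ∀ x ≠ 0, f (p * x) = 0 ↔ f x = 0) {a x : ℂ} (ha : a ≠ 0) (hfa : f a = 0)
    (h : theta p (x * a⁻¹) = 0) : f x = 0 := by
  obtain ⟨n, hn⟩ := exists_zpow_eq_of_theta_eq_zero hp h
  rw [eq_mul_inv_iff_mul_eq₀ ha] at hn
  exact hn ▸ (zpow_mul_iff_of_forall_mul_iff (P := fun x => f x = 0) hp0 hf n ha).2 hfa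

lemma exists_eq_zpow_mul_of_theta_sq_eq_zero (hp : ‖p‖ < 1) (hp0 : p ≠ 0) {x : ℂ}
    (h : theta p (x ^ 2) = 0) :
    ∃ (n : ℤ) (y : ℂ), (y ^ 2 = 1 ∨ y ^ 2 = p) ∧ x = p ^ n * y := by
  obtain ⟨n, hn⟩ := exists_zpow_eq_of_theta_eq_zero hp h
  have hcancel (m : ℤ) : x = p ^ m * ((p ^ m)⁻¹ * x) :=
    (mul_inv_cancel_left₀ (zpow_ne_zero m hp0) x).symm
  have hsq (m : ℤ) : ((p ^ m)⁻¹ * x) ^ 2 = p ^ (n - 2 * m) := by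
    rw [mul_pow, ← hn, zpow_sub₀ hp0, mul_comm 2 m, zpow_mul p m, zpow_ofNat]
    field_simp
  rcases Int.even_or_odd' n with ⟨m, hm | hm⟩
  · exact ⟨m, (p ^ m)⁻¹ * x, .inl (by simp [hsq, hm]), hcancel m⟩
  · exact ⟨m, (p ^ m)⁻¹ * x, .inr (by simp [hsq, hm]), hcancel m⟩

section

variable (hmul : ∀ z ≠ 0, f (p * z) = (p ^ 2)⁻¹ * (z ^ 6)⁻¹ * f z)
  (hinv : ∀ z ≠ 0, f z⁻¹ = -(z ^ 2)⁻¹ * f z)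
include hmul hinv

lemma eq_zero_of_theta_symmetry_of_theta_sq_eq_zero (hp : ‖p‖ < 1) (hp0 : p ≠ 0) {x : ℂ}
    (hx : x ≠ 0) (h : theta p (x ^ 2) = 0) : f x = 0 := by
  obtain ⟨n, y, hy, rfl⟩ := exists_eq_zpow_mul_of_theta_sq_eq_zero hp hp0 h
  have hy0 : y ≠ 0 := right_ne_zero_of_mul hx
  refine (zpow_mul_iff_of_forall_mul_iff (P := fun x => f x = 0) hp0
    (fun x hx => by simp [hmul x hx, hp0, hx]) n hy0).2 (CharZero.eq_neg_self_iff.1 ?_)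
  rcases hy with hy | hy
  · have hself : y⁻¹ = y := inv_eq_of_mul_eq_one_left ((sq y).symm.trans hy)
    simpa [hself, hy] using hinv y hy0
  · have hfix : p * y⁻¹ = y := by rw [← hy]; field_simp
    have hneg := hmul y⁻¹ (inv_ne_zero hy0)
    rw [hfix, hinv y hy0, ← hy] at hneg
    exact hneg.trans (by field_simp)

lemma exists_eq_theta_sq_mul_thetaPair_mul (hp : ‖p‖ < 1) (hp0 : p ≠ 0)
    (hf : DifferentiableOn ℂ f {0}ᶜ) {a : ℂ} (ha : a ≠ 0) (hfa : f a = 0)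
    (haa : theta p (a ^ 2) ≠ 0) :
    ∃ k : ℂ → ℂ, DifferentiableOn ℂ k {0}ᶜ ∧
      ∀ x ≠ 0, f x = theta p (x ^ 2) * thetaPair p a x * k x := by
  have hfmul : ∀ x ≠ 0, f (p * x) = 0 ↔ f x = 0 := fun x hx => by simp [hmul x hx, hp0, hx]
  obtain ⟨k₁, hk₁, hfk₁⟩ := exists_eq_theta_comp_mul hp hp0 (φ := fun x => x ^ 2) (by fun_prop)
    (fun x hx => pow_ne_zero 2 hx) (fun x hx => by simpa using hx) hf fun x hx =>
      eq_zero_of_theta_symmetry_of_theta_sq_eq_zero hmul hinv hp hp0 hx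
  obtain ⟨k₂, hk₂, hfk₂⟩ := exists_eq_theta_comp_mul hp hp0 (φ := fun x => a * x) (by fun_prop)
    (fun x hx => mul_ne_zero ha hx) (fun x _ => by simp [ha]) hk₁ fun x hx hax => by
      have hfx : f x = 0 := eq_zero_of_theta_mul_inv_eq_zero hp hp0 hfmul (inv_ne_zero ha)
        (by simp [hinv a ha, hfa]) (by rwa [inv_inv, mul_comm])
      rw [hfk₁ x hx] at hfx
      exact (mul_eq_zero.1 hfx).resolve_left
        (theta_mul_ne_zero_of_theta_sq_ne_zero hp hp0 hx haa hax).1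
  obtain ⟨k, hk, hfk⟩ := exists_eq_theta_comp_mul hp hp0 (φ := fun x => a * x⁻¹)
    (fun x hx => ((differentiableAt_inv hx).const_mul a).differentiableWithinAt)
    (fun x hx => mul_ne_zero ha (inv_ne_zero hx)) (fun x hx => by simp [ha, hx]) hk₂
    fun x hx hax => by
      have hfx : f x = 0 := eq_zero_of_theta_mul_inv_eq_zero hp hp0 hfmul ha hfa (by
        rwa [← theta_inv_eq_zero_iff hp (by positivity), mul_inv, inv_inv, mul_comm])
      have hne := theta_mul_ne_zero_of_theta_sq_ne_zero hp hp0 (inv_ne_zero hx) haa hax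
      rw [inv_pow, Ne, theta_inv_eq_zero_iff hp (by positivity), inv_inv] at hne
      rw [hfk₁ x hx, hfk₂ x hx] at hfx
      exact (mul_eq_zero.1 ((mul_eq_zero.1 hfx).resolve_left hne.1)).resolve_left hne.2
  refine ⟨k, hk, fun x hx => ?_⟩
  rw [hfk₁ x hx, hfk₂ x hx, hfk x hx, thetaPair]
  ring

/-- The even functions `f(z)/θ(z²)` form a space of theta functions of degree two, so one that
vanishes at two independent points is zero. -/
theorem eq_zero_of_theta_symmetry (hp : ‖p‖ < 1) (hp0 : p ≠ 0) (hf : DifferentiableOn ℂ f {0}ᶜ)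
    {a b : ℂ} (ha : a ≠ 0) (hb : b ≠ 0) (hfa : f a = 0) (hfb : f b = 0)
    (haa : theta p (a ^ 2) ≠ 0) (hbb : theta p (b ^ 2) ≠ 0) (hab : thetaPair p a b ≠ 0) :
    ∀ z ≠ 0, f z = 0 := by
  obtain ⟨k, hk, hfk⟩ := exists_eq_theta_sq_mul_thetaPair_mul hmul hinv hp hp0 hf ha hfa haa
  have hper : ∀ x ≠ 0, k (p * x) - k x = 0 := by
    refine eq_zero_of_mul_eq_zero_of_ne_zero (g := fun x => theta p (x ^ 2) * thetaPair p a x)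
      ((hk.comp (f := fun x => p * x) (by fun_prop) fun x hx => mul_ne_zero hp0 hx).sub hk)
      (fun x hx => ?_) (fun x hx => ?_) hb (mul_ne_zero hbb hab)
    · exact ((differentiableAt_theta_comp hp (φ := fun x => x ^ 2) (by fun_prop)
        (pow_ne_zero 2 hx)).mul
        (differentiableAt_thetaPair hp ha hx)).differentiableWithinAt
    · have hfpx := hmul x hx
      rw [hfk _ (mul_ne_zero hp0 hx), hfk x hx, theta_sq_mul_left hp hp0 hx,
        thetaPair_mul_left hp hp0 ha hx] at hfpx
      field_simp at hfpx
      linear_combination hfpx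
  intro z hz
  have hkb : k b = 0 :=
    (mul_eq_zero.1 ((hfk b hb).symm.trans hfb)).resolve_left (mul_ne_zero hbb hab)
  have hkz : k z = k b := apply_eq_of_mul_periodic (norm_pos_iff.2 hp0) hp hk
    (fun x hx => sub_eq_zero.1 (hper x hx)) hz hb
  rw [hfk z hz, hkz, hkb, mul_zero]

end

end ThetaSymmetry

section ThetaIdentity

/-- The product `∏ᵢ θ(tᵢz;p)` over a family of parameters. -/
noncomputable def thetaProd {ι : Type*} [Fintype ι] (p : ℂ) (t : ι → ℂ) (z : ℂ) : ℂ :=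
  ∏ i, theta p (t i * z)

lemma thetaProd_cons {n : ℕ} (p a : ℂ) (t : Fin n → ℂ) (z : ℂ) :
    thetaProd p (Fin.cons a t : Fin (n + 1) → ℂ) z = theta p (a * z) * thetaProd p t z := by
  simp [thetaProd, Fin.prod_univ_succ]

lemma cons_ne_zero {n : ℕ} {a : ℂ} (ha : a ≠ 0) {t : Fin n → ℂ} (ht : ∀ i, t i ≠ 0)
    (i : Fin (n + 1)) : (Fin.cons a t : Fin (n + 1) → ℂ) i ≠ 0 :=
  Fin.cases ha ht i

section

variable {ι : Type*} [Fintype ι] {t : ι → ℂ}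

lemma thetaProd_mul_left (hp : ‖p‖ < 1) (hp0 : p ≠ 0) (ht : ∀ i, t i ≠ 0) {z : ℂ} (hz : z ≠ 0) :
    thetaProd p t (p * z) = (∏ i, t i)⁻¹ * (-z⁻¹) ^ Fintype.card ι * thetaProd p t z := by
  simp only [thetaProd, theta_mul_mul_left hp hp0 (ht _) hz, Finset.prod_mul_distrib,
    ← Finset.prod_inv_distrib, ← Finset.card_univ, ← Finset.prod_const]
  congr 1
  rw [← Finset.prod_mul_distrib]
  exact Finset.prod_congr rfl fun i _ => by rw [mul_inv, mul_neg]

lemma differentiableAt_thetaProd (hp : ‖p‖ < 1) (ht : ∀ i, t i ≠ 0) {z : ℂ} (hz : z ≠ 0) :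
    DifferentiableAt ℂ (thetaProd p t) z := by
  unfold thetaProd
  exact DifferentiableAt.fun_finsetProd fun i _ =>
    differentiableAt_theta_comp hp (φ := fun z => t i * z) (by fun_prop) (mul_ne_zero (ht i) hz)

end

/-- The difference of the two sides of the theta function identity behind the contour shift; see
`thetaDefect_eq_zero`. -/
noncomputable def thetaDefect (p a b : ℂ) (c : Fin 4 → ℂ) (z : ℂ) : ℂ :=
  theta p (z ^ 2) * (thetaPair p a z * thetaProd p c b - thetaPair p b z * thetaProd p c a) -
    b * theta p (a * b⁻¹) *
      (z⁻¹ * thetaProd p (Fin.cons a (Fin.cons b c) : Fin 6 → ℂ) z -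
        z ^ 3 * thetaProd p (Fin.cons a (Fin.cons b c) : Fin 6 → ℂ) z⁻¹)

section

variable (hp : ‖p‖ < 1) {a b : ℂ} (ha : a ≠ 0) (hb : b ≠ 0) {c : Fin 4 → ℂ}

include hp in
lemma thetaDefect_inv {z : ℂ} (hz : z ≠ 0) :
    thetaDefect p a b c z⁻¹ = -(z ^ 2)⁻¹ * thetaDefect p a b c z := by
  rw [thetaDefect, thetaDefect, inv_inv, inv_pow, theta_inv hp (pow_ne_zero 2 hz), thetaPair_inv,
    thetaPair_inv]
  field_simp
  ring

include hp ha hb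

lemma thetaDefect_self_left : thetaDefect p a b c a = 0 := by
  have hba : theta p (b * a⁻¹) = -(b * a⁻¹) * theta p (a * b⁻¹) := by
    have h := theta_inv hp (z := a * b⁻¹) (by positivity)
    rwa [mul_inv, inv_inv, mul_comm a⁻¹] at h
  rw [thetaDefect]
  simp only [thetaProd_cons, thetaPair, mul_inv_cancel₀ ha, theta_one hp, hba]
  rw [mul_comm b a, pow_two]
  field_simp
  ring

omit ha in
lemma thetaDefect_self_right : thetaDefect p a b c b = 0 := by
  rw [thetaDefect]
  simp only [thetaProd_cons, thetaPair, mul_inv_cancel₀ hb, theta_one hp]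
  rw [pow_two]
  field_simp
  ring

variable (hc : ∀ i, c i ≠ 0)
include hc

lemma thetaDefect_mul_left (hp0 : p ≠ 0) (habc : a * b * ∏ i, c i = p) {z : ℂ} (hz : z ≠ 0) :
    thetaDefect p a b c (p * z) = (p ^ 2)⁻¹ * (z ^ 6)⁻¹ * thetaDefect p a b c z := by
  have hprod : ∏ i, (Fin.cons a (Fin.cons b c) : Fin 6 → ℂ) i = p := by
    rw [Fin.prod_cons, Fin.prod_cons, ← mul_assoc, habc]
  have hmul {z : ℂ} (hz : z ≠ 0) : thetaProd p (Fin.cons a (Fin.cons b c) : Fin 6 → ℂ) (p * z) =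
      p⁻¹ * (z ^ 6)⁻¹ * thetaProd p (Fin.cons a (Fin.cons b c) : Fin 6 → ℂ) z := by
    rw [thetaProd_mul_left hp hp0 (cons_ne_zero ha (cons_ne_zero hb hc)) hz, hprod,
      Fintype.card_fin, Even.neg_pow (by decide), inv_pow]
  have hinv := hmul (z := (p * z)⁻¹) (by positivity)
  rw [show p * (p * z)⁻¹ = z⁻¹ by field_simp, ← inv_pow, inv_inv] at hinv
  rw [thetaDefect, thetaDefect, theta_sq_mul_left hp hp0 hz, thetaPair_mul_left hp hp0 ha hz,
    thetaPair_mul_left hp hp0 hb hz, hmul hz, hinv]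
  field_simp

lemma differentiableOn_thetaDefect : DifferentiableOn ℂ (thetaDefect p a b c) {0}ᶜ := by
  intro z hz
  have hprod {z : ℂ} (hz : z ≠ 0) :=
    differentiableAt_thetaProd hp (cons_ne_zero ha (cons_ne_zero hb hc)) hz
  have hprod_inv := (hprod (inv_ne_zero hz)).comp z (differentiableAt_inv hz)
  have hsq := differentiableAt_theta_comp hp (φ := fun z => z ^ 2) (differentiableAt_pow 2)
    (pow_ne_zero 2 hz)
  refine DifferentiableAt.differentiableWithinAt ?_
  exact (hsq.mul (((differentiableAt_thetaPair hp ha hz).mul_const _).sub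
    ((differentiableAt_thetaPair hp hb hz).mul_const _))).sub
      ((((differentiableAt_inv hz).mul (hprod hz)).sub
        ((differentiableAt_pow 3).mul hprod_inv)).const_mul _)

lemma thetaDefect_eq_zero_of_ne_zero (hp0 : p ≠ 0) (habc : a * b * ∏ i, c i = p)
    (haa : theta p (a ^ 2) ≠ 0) (hbb : theta p (b ^ 2) ≠ 0) (hab : thetaPair p a b ≠ 0) {z : ℂ}
    (hz : z ≠ 0) : thetaDefect p a b c z = 0 :=
  eq_zero_of_theta_symmetry (fun _ hx => thetaDefect_mul_left hp ha hb hc hp0 habc hx)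
    (fun _ hx => thetaDefect_inv hp hx) hp hp0 (differentiableOn_thetaDefect hp ha hb hc) ha hb
    (thetaDefect_self_left hp ha hb) (thetaDefect_self_right hp hb) haa hbb hab z hz

end

lemma exists_theta_sq_mul_ne_zero (hp : ‖p‖ < 1) {c : ℂ} (hc : c ≠ 0) :
    ∃ x ≠ 0, theta p (x ^ 2 * c) ≠ 0 := by
  obtain ⟨x, hx⟩ := IsAlgClosed.exists_pow_nat_eq (-c⁻¹) two_pos
  refine ⟨x, fun h0 => ?_, ?_⟩
  · simp [h0, hc] at hx
  · rw [hx, neg_mul, inv_mul_cancel₀ hc, theta_neg_one hp]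
    simpa using qpoch_ne_zero hp (by simpa using hp)

lemma eq_zero_of_forall_theta_sq_mul_ne_zero (hp : ‖p‖ < 1) (s : Finset ℂ) (hs : ∀ c ∈ s, c ≠ 0)
    {f : ℂ → ℂ} (hf : DifferentiableOn ℂ f {0}ᶜ)
    (h : ∀ x ≠ 0, (∀ c ∈ s, theta p (x ^ 2 * c) ≠ 0) → f x = 0) : ∀ x ≠ 0, f x = 0 := by
  induction s using Finset.cons_induction generalizing f with
  | empty => simpa using h
  | cons c s _ ih =>
    simp only [Finset.mem_cons, forall_eq_or_imp] at hs h
    have hθ : DifferentiableOn ℂ (fun x => theta p (x ^ 2 * c)) {0}ᶜ := fun x hx =>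
      (differentiableAt_theta_comp hp (φ := fun x => x ^ 2 * c) (by fun_prop)
        (mul_ne_zero (pow_ne_zero 2 hx) hs.1)).differentiableWithinAt
    obtain ⟨x₁, hx₁, hθx₁⟩ := exists_theta_sq_mul_ne_zero hp hs.1
    refine eq_zero_of_mul_eq_zero_of_ne_zero hf hθ (ih hs.2 (hf.mul hθ) fun x hx hxs => ?_) hx₁ hθx₁
    by_cases hc : theta p (x ^ 2 * c) = 0
    · simp [hc]
    · simp [h x hx ⟨hc, hxs⟩]

lemma differentiableOn_thetaDefect_param (hp : ‖p‖ < 1) {m : ℂ} (hm : m ≠ 0) {c : Fin 4 → ℂ}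
    (hc : ∀ i, c i ≠ 0) {z : ℂ} (hz : z ≠ 0) :
    DifferentiableOn ℂ (fun x => thetaDefect p x (m * x⁻¹) c z) {0}ᶜ := by
  intro x hx
  have hmx : DifferentiableAt ℂ (fun x => m * x⁻¹) x := (differentiableAt_inv hx).const_mul m
  have hmx0 : m * x⁻¹ ≠ 0 := mul_ne_zero hm (inv_ne_zero hx)
  have hθ (w : ℂ) (hw : w ≠ 0) := differentiableAt_theta_comp hp (φ := fun x => x * w)
    (by fun_prop) (mul_ne_zero hx hw)
  have hθ' (w : ℂ) (hw : w ≠ 0) := differentiableAt_theta_comp hp (φ := fun x => m * x⁻¹ * w)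
    (hmx.mul_const w) (mul_ne_zero hmx0 hw)
  have hratio := differentiableAt_theta_comp hp (φ := fun x => x * (m * x⁻¹)⁻¹)
    (differentiableAt_id.mul (hmx.inv hmx0)) (mul_ne_zero hx (inv_ne_zero hmx0))
  have hprod := differentiableAt_thetaProd hp hc hx
  have hprod' := (differentiableAt_thetaProd hp hc hmx0).comp x hmx
  have hsix (w : ℂ) (hw : w ≠ 0) : DifferentiableAt ℂ (fun x =>
      thetaProd p (Fin.cons x (Fin.cons (m * x⁻¹) c) : Fin 6 → ℂ) w) x := by
    simp only [thetaProd_cons]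
    exact (hθ w hw).mul ((hθ' w hw).mul_const _)
  have hzi := inv_ne_zero hz
  refine DifferentiableAt.differentiableWithinAt ?_
  exact ((((hθ z hz).mul (hθ _ hzi)).mul hprod').sub
    (((hθ' z hz).mul (hθ' _ hzi)).mul hprod)).const_mul _ |>.sub
      ((hmx.mul hratio).mul (((hsix z hz).const_mul _).sub ((hsix _ hzi).const_mul _)))

theorem thetaDefect_eq_zero (hp : ‖p‖ < 1) (hp0 : p ≠ 0) {a b : ℂ} (ha : a ≠ 0) (hb : b ≠ 0)
    {c : Fin 4 → ℂ} (hc : ∀ i, c i ≠ 0) (habc : a * b * ∏ i, c i = p)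
    (hab : theta p (a * b) ≠ 0) {z : ℂ} (hz : z ≠ 0) : thetaDefect p a b c z = 0 := by
  set m := a * b with hm
  have hm0 : m ≠ 0 := mul_ne_zero ha hb
  have hb_eq : m * a⁻¹ = b := by rw [hm]; field_simp
  have hgeneric : ∀ x ≠ 0, thetaDefect p x (m * x⁻¹) c z = 0 := by
    refine eq_zero_of_forall_theta_sq_mul_ne_zero hp {1, (m ^ 2)⁻¹, m⁻¹} (by simp [hm0])
      (differentiableOn_thetaDefect_param hp hm0 hc hz) fun x hx hθ => ?_
    simp only [Finset.mem_insert, Finset.mem_singleton, forall_eq_or_imp, forall_eq, mul_one] at hθ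
    obtain ⟨hxx, hmm, hxm⟩ := hθ
    refine thetaDefect_eq_zero_of_ne_zero hp hx (by positivity) hc hp0 ?_ hxx ?_ ?_ hz
    · rw [← habc]
      field_simp
    · rw [Ne, ← theta_inv_eq_zero_iff hp (by positivity)]
      rwa [show ((m * x⁻¹) ^ 2)⁻¹ = x ^ 2 * (m ^ 2)⁻¹ by field_simp]
    · refine mul_ne_zero ?_ ?_
      · rwa [show x * (m * x⁻¹) = m by field_simp]
      · rwa [show x * (m * x⁻¹)⁻¹ = x ^ 2 * m⁻¹ by field_simp]
  exact hb_eq ▸ hgeneric a ha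

end ThetaIdentity

/-! ### The contour integral -/

section CircleAverage

variable {f : ℂ → ℂ}

lemma circleAverage_comp_mul_left (f : ℂ → ℂ) (ζ : ℂ) :
    circleAverage (fun z => f (ζ * z)) 0 1 = circleAverage f 0 ‖ζ‖ := by
  rw [circleAverage_def, circleAverage_eq_integral_add ζ.arg]
  congr! 5 with u
  nth_rw 1 [← norm_mul_exp_arg_mul_I ζ]
  simp only [circleMap, ofReal_one, ofReal_add, zero_add, one_mul, add_mul, Complex.exp_add]
  ring

lemma circleAverage_const_mul (a : ℂ) (f : ℂ → ℂ) :
    circleAverage (fun z => a * f z) 0 1 = a * circleAverage f 0 1 :=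
  circleAverage_fun_smul (𝕜 := ℂ) (E := ℂ)

lemma circleAverage_eq_of_differentiableAt_annulus {r R : ℝ} (hr : 0 < r) (hrR : r ≤ R)
    (hf : ∀ z, r ≤ ‖z‖ → ‖z‖ ≤ R → DifferentiableAt ℂ f z) :
    circleAverage f 0 R = circleAverage f 0 r := by
  rw [circleAverage_eq_circleIntegral (hr.trans_le hrR).ne', circleAverage_eq_circleIntegral hr.ne',
    circleIntegral_sub_center_inv_smul_eq_of_differentiable_on_annulus_off_countable hr hrR
      Set.countable_empty]
  · refine fun z hz => (hf z ?_ ?_).continuousAt.continuousWithinAt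
    · simpa using hz.2
    · simpa using hz.1
  · refine fun z hz => hf z ?_ ?_
    · exact (by simpa using hz.1.2 : r < ‖z‖).le
    · exact (by simpa using hz.1.1 : ‖z‖ < R).le

lemma circleAverage_eq_zero_of_apply_mul_inv_eq_neg (hq : ‖q‖ ≤ 1) (hq0 : q ≠ 0)
    (hf : ∀ z, 1 ≤ ‖z‖ → ‖q * z‖ ≤ 1 → DifferentiableAt ℂ f z)
    (hanti : ∀ z ≠ 0, f (q * z)⁻¹ = -f z) : circleAverage f 0 1 = 0 := by
  have hqn : 0 < ‖q‖ := norm_pos_iff.2 hq0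
  refine CharZero.eq_neg_self_iff.1 ?_
  calc circleAverage f 0 1 = circleAverage f 0 ‖q⁻¹‖ := by
        rw [norm_inv]
        refine (circleAverage_eq_of_differentiableAt_annulus one_pos ((one_le_inv₀ hqn).2 hq)
          fun z hz hz' => hf z hz ?_).symm
        rwa [norm_mul, ← le_inv_mul_iff₀ hqn, mul_one]
    _ = circleAverage (fun z => f (q⁻¹ * z⁻¹)) 0 1 := by
        rw [← circleAverage_comp_mul_left,
          ← circleAverage_zero_one_congr_inv (f := fun z => f (q⁻¹ * z))]
    _ = circleAverage (fun z => (-1 : ℂ) • f z) 0 1 := by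
        refine circleAverage_congr_sphere fun z hz => ?_
        have hz0 : z ≠ 0 := norm_pos_iff.1 (by simp_all)
        simp only [← mul_inv, hanti z hz0, neg_smul, one_smul]
    _ = -circleAverage f 0 1 := by rw [circleAverage_fun_smul, neg_one_smul]

lemma circleIntegrable_of_differentiableAt (hf : ∀ z, ‖z‖ = 1 → DifferentiableAt ℂ f z) :
    CircleIntegrable f 0 1 :=
  ContinuousOn.circleIntegrable' fun z hz =>
    (hf z (by simpa using hz)).continuousAt.continuousWithinAt

end CircleAverage

section BetaIntegrand

variable {ι : Type*} [Fintype ι] {t : ι → ℂ} {a z : ℂ}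

/-- The product `Γ(az;p,q) Γ(a/z;p,q)`, symmetric under `z ↦ z⁻¹`. -/
noncomputable def egammaPair (p q a z : ℂ) : ℂ := egamma (a * z) p q * egamma (a * z⁻¹) p q

/-- The weight `1 / (Γ(z²;p,q) Γ(z⁻²;p,q))`, in the form of a product of two theta functions which
is holomorphic on the punctured plane. -/
noncomputable def betaWeight (p q z : ℂ) : ℂ := theta p (z ^ 2) * theta q ((z ^ 2)⁻¹)

/-- The integrand of the elliptic beta integral with parameters `t`. -/
noncomputable def betaIntegrand (p q : ℂ) (t : ι → ℂ) (z : ℂ) : ℂ :=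
  (∏ i, egammaPair p q (t i) z) * betaWeight p q z

/-- The elliptic beta integral with parameters `t`, normalised as an average over the circle. -/
noncomputable def ellipticBeta (p q : ℂ) (t : ι → ℂ) : ℂ :=
  circleAverage (betaIntegrand p q t) 0 1

/-- A function whose values at `z` and `z⁻¹` add up to the difference of two beta integrands, with
parameters `(qa, b, …)` and `(a, qb, …)`, and which is odd under `z ↦ (qz)⁻¹`. -/
noncomputable def shiftPrimitive (p q : ℂ) (t : ι → ℂ) (z : ℂ) : ℂ :=
  z⁻¹ * (∏ i, egamma (q * (t i * z)) p q * egamma (t i * z⁻¹) p q) * theta q ((z ^ 2)⁻¹)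

lemma egammaPair_inv (p q a z : ℂ) : egammaPair p q a z⁻¹ = egammaPair p q a z := by
  rw [egammaPair, egammaPair, inv_inv, mul_comm]

lemma norm_mul_inv_lt_one (ha : ‖a‖ < 1) (hz : 1 ≤ ‖z‖) : ‖a * z⁻¹‖ < 1 :=
  norm_mul_lt_one ha (by simpa using inv_le_one_of_one_le₀ hz)

section

variable {E : Type*} [NormedAddCommGroup E] [NormedSpace ℂ E] {x : E}

lemma differentiableAt_finset_prod {κ : Type*} {s : Finset κ} {φ : κ → E → ℂ}
    (hφ : ∀ k ∈ s, DifferentiableAt ℂ (φ k) x) :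
    DifferentiableAt ℂ (fun x => ∏ k ∈ s, φ k x) x := by
  classical
  exact (HasFDerivAt.finsetProd fun k hk => (hφ k hk).hasFDerivAt).differentiableAt

lemma differentiableAt_egamma_comp (hp : ‖p‖ < 1) (hq : ‖q‖ < 1) {φ : E → ℂ}
    (hφ : DifferentiableAt ℂ φ x) (hx0 : φ x ≠ 0) (hx : ‖φ x‖ < 1) :
    DifferentiableAt ℂ (fun x => egamma (φ x) p q) x :=
  (differentiableAt_egamma hp hq hx0 hx).comp x hφ

end

lemma differentiableAt_betaWeight (hp : ‖p‖ < 1) (hq : ‖q‖ < 1) (hz : z ≠ 0) :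
    DifferentiableAt ℂ (betaWeight p q) z :=
  (differentiableAt_theta_comp hp (φ := fun z => z ^ 2) (by fun_prop) (by positivity)).mul
    (differentiableAt_theta_comp hq (φ := fun z => (z ^ 2)⁻¹)
      (by fun_prop (disch := positivity)) (by positivity))

lemma inv_egamma_sq_mul_egamma_inv_sq (hp : ‖p‖ < 1) (hq : ‖q‖ < 1) (hz : ‖z‖ = 1) :
    (egamma (z ^ 2) p q * egamma (z ^ 2)⁻¹ p q)⁻¹ = betaWeight p q z := by
  have hne {x : ℂ} (hx : ‖x‖ = 1) : doublePoch p q (p * q * x) ≠ 0 :=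
    doublePoch_ne_zero hp hq (norm_mul_lt_one (norm_mul_lt_one hp hq.le) hx.le)
  have h₁ := hne (x := z ^ 2) (by simp [hz])
  have h₂ := hne (x := (z ^ 2)⁻¹) (by simp [hz])
  rw [egamma_eq_div hp hq, egamma_eq_div hp hq, inv_inv, doublePoch_eq_qpoch_left_mul hp hq (z ^ 2),
    doublePoch_eq_qpoch_right_mul hp hq (q * z ^ 2),
    doublePoch_eq_qpoch_right_mul hp hq (z ^ 2)⁻¹,
    doublePoch_eq_qpoch_left_mul hp hq (p * (z ^ 2)⁻¹), betaWeight, theta, theta, inv_inv,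
    ← mul_assoc p q, mul_left_comm q p, ← mul_assoc p q, div_mul_div_comm, inv_div,
    div_eq_iff (mul_ne_zero h₂ h₁)]
  ring

section

variable (hp : ‖p‖ < 1) (hq : ‖q‖ < 1)
include hp hq

lemma differentiableAt_uncurry_egammaPair (ha0 : a ≠ 0) (ha : ‖a‖ < 1) (hz : ‖z‖ = 1) :
    DifferentiableAt ℂ (Function.uncurry (egammaPair p q)) (a, z) := by
  have hz0 : z ≠ 0 := norm_pos_iff.1 (hz ▸ one_pos)
  exact (differentiableAt_egamma_comp hp hq (φ := fun y : ℂ × ℂ => y.1 * y.2) (by fun_prop)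
      (mul_ne_zero ha0 hz0) (norm_mul_lt_one ha hz.le)).mul
    (differentiableAt_egamma_comp hp hq (φ := fun y : ℂ × ℂ => y.1 * y.2⁻¹)
      (by fun_prop (disch := assumption)) (mul_ne_zero ha0 (inv_ne_zero hz0))
      (norm_mul_inv_lt_one ha hz.ge))

lemma differentiableAt_uncurry_betaIntegrand (ht0 : ∀ i, t i ≠ 0) (ht : ∀ i, ‖t i‖ < 1)
    (hz : ‖z‖ = 1) : DifferentiableAt ℂ (Function.uncurry (betaIntegrand p q)) (t, z) := by
  have hpair (i : ι) : DifferentiableAt ℂ (fun y : (ι → ℂ) × ℂ => egammaPair p q (y.1 i) y.2)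
      (t, z) :=
    (differentiableAt_uncurry_egammaPair hp hq (ht0 i) (ht i) hz).comp (t, z)
      (f := fun y : (ι → ℂ) × ℂ => (y.1 i, y.2)) (by fun_prop)
  exact (differentiableAt_finset_prod fun i _ => hpair i).mul
    ((differentiableAt_betaWeight hp hq (norm_pos_iff.1 (hz ▸ one_pos))).comp (t, z)
      differentiableAt_snd)

lemma differentiableAt_betaIntegrand (ht0 : ∀ i, t i ≠ 0) (ht : ∀ i, ‖t i‖ < 1) (hz : ‖z‖ = 1) :
    DifferentiableAt ℂ (betaIntegrand p q t) z :=
  (differentiableAt_uncurry_betaIntegrand hp hq ht0 ht hz).comp z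
    (f := fun z => (t, z)) (by fun_prop)

lemma differentiableAt_shiftPrimitive (hq0 : q ≠ 0) (ht0 : ∀ i, t i ≠ 0) (ht : ∀ i, ‖t i‖ < 1)
    (hz : 1 ≤ ‖z‖) (hqz : ‖q * z‖ ≤ 1) : DifferentiableAt ℂ (shiftPrimitive p q t) z := by
  have hz0 : z ≠ 0 := norm_pos_iff.1 (one_pos.trans_le hz)
  have hfactor (i : ι) : DifferentiableAt ℂ
      (fun z => egamma (q * (t i * z)) p q * egamma (t i * z⁻¹) p q) z := by
    have hi := ht0 i
    refine (differentiableAt_egamma_comp hp hq (by fun_prop) (by positivity) ?_).mul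
      (differentiableAt_egamma_comp hp hq (by fun_prop (disch := assumption)) (by positivity)
        (norm_mul_inv_lt_one (ht i) hz))
    simpa only [mul_left_comm] using norm_mul_lt_one (ht i) hqz
  exact ((differentiableAt_inv hz0).mul (differentiableAt_finset_prod fun i _ => hfactor i)).mul
    (differentiableAt_theta_comp hq (by fun_prop (disch := positivity)) (by positivity))

lemma egammaPair_mul_left (hq0 : q ≠ 0) (ha : ‖a‖ < 1) (hz : ‖z‖ = 1) :
    egammaPair p q (q * a) z = thetaPair p a z * egammaPair p q a z := by
  rw [egammaPair, mul_assoc q, mul_assoc q, egamma_mul_left hp hq hq0 (norm_mul_lt_one ha hz.le),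
    egamma_mul_left hp hq hq0 (norm_mul_inv_lt_one ha hz.ge), thetaPair, egammaPair]
  ring

lemma shiftPrimitive_eq (hq0 : q ≠ 0) (ht : ∀ i, ‖t i‖ < 1) (hz : ‖z‖ = 1) :
    shiftPrimitive p q t z =
      z⁻¹ * thetaProd p t z * (∏ i, egammaPair p q (t i) z) * theta q ((z ^ 2)⁻¹) := by
  simp only [shiftPrimitive, thetaProd, egammaPair, mul_assoc z⁻¹, ← Finset.prod_mul_distrib]
  simp only [egamma_mul_left hp hq hq0 (norm_mul_lt_one (ht _) hz.le), mul_assoc]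

end

lemma shiftPrimitive_mul_inv (hq : ‖q‖ < 1) (hq0 : q ≠ 0) (p : ℂ) (t : ι → ℂ) (hz : z ≠ 0) :
    shiftPrimitive p q t (q * z)⁻¹ = -shiftPrimitive p q t z := by
  have htheta : theta q (((q * z)⁻¹ ^ 2)⁻¹) = -(q * z ^ 2)⁻¹ * theta q ((z ^ 2)⁻¹) := by
    rw [← theta_mul_inv hq0 ((z ^ 2)⁻¹), inv_inv, ← theta_mul_left hq hq0 (by positivity)]
    congr 1
    field_simp
  have hfactor (a : ℂ) : egamma (q * (a * (q * z)⁻¹)) p q * egamma (a * (q * z)⁻¹⁻¹) p q =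
      egamma (q * (a * z)) p q * egamma (a * z⁻¹) p q := by
    rw [mul_comm, inv_inv, mul_left_comm a, mul_inv, mul_left_comm a, mul_inv_cancel_left₀ hq0]
  simp only [shiftPrimitive, hfactor, htheta]
  field_simp

lemma circleAverage_shiftPrimitive (hp : ‖p‖ < 1) (hq : ‖q‖ < 1) (hq0 : q ≠ 0)
    (ht0 : ∀ i, t i ≠ 0) (ht : ∀ i, ‖t i‖ < 1) : circleAverage (shiftPrimitive p q t) 0 1 = 0 :=
  circleAverage_eq_zero_of_apply_mul_inv_eq_neg hq.le hq0
    (fun _ hz hqz => differentiableAt_shiftPrimitive hp hq hq0 ht0 ht hz hqz)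
    fun _ hz => shiftPrimitive_mul_inv hq hq0 p t hz

lemma circleIntegrable_shiftPrimitive (hp : ‖p‖ < 1) (hq : ‖q‖ < 1) (hq0 : q ≠ 0)
    (ht0 : ∀ i, t i ≠ 0) (ht : ∀ i, ‖t i‖ < 1) : CircleIntegrable (shiftPrimitive p q t) 0 1 :=
  circleIntegrable_of_differentiableAt fun z hz =>
    differentiableAt_shiftPrimitive hp hq hq0 ht0 ht hz.ge (by simpa [hz] using hq.le)

lemma circleIntegrable_betaIntegrand (hp : ‖p‖ < 1) (hq : ‖q‖ < 1)
    (ht0 : ∀ i, t i ≠ 0) (ht : ∀ i, ‖t i‖ < 1) : CircleIntegrable (betaIntegrand p q t) 0 1 :=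
  circleIntegrable_of_differentiableAt fun _ hz => differentiableAt_betaIntegrand hp hq ht0 ht hz

end BetaIntegrand

section Shift

lemma cons_norm_lt_one {n : ℕ} {a : ℂ} (ha : ‖a‖ < 1) {t : Fin n → ℂ} (ht : ∀ i, ‖t i‖ < 1)
    (i : Fin (n + 1)) : ‖(Fin.cons a t : Fin (n + 1) → ℂ) i‖ < 1 :=
  Fin.cases ha ht i

variable (hp : ‖p‖ < 1) (hp0 : p ≠ 0) (hq : ‖q‖ < 1) (hq0 : q ≠ 0) {a b : ℂ} {c : Fin 4 → ℂ}
  (ha0 : a ≠ 0) (ha : ‖a‖ < 1) (hb0 : b ≠ 0) (hb : ‖b‖ < 1) (hc0 : ∀ i, c i ≠ 0)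
  (hc : ∀ i, ‖c i‖ < 1) (habc : a * b * ∏ i, c i = p) (hab : theta p (a * b) ≠ 0)
include hp hp0 hq hq0 ha0 ha hb0 hb hc0 hc habc hab

lemma betaIntegrand_shift_sub {z : ℂ} (hz : ‖z‖ = 1) :
    thetaProd p c b *
        betaIntegrand p q (Fin.cons (q * a) (Fin.cons b c) : Fin 6 → ℂ) z -
      thetaProd p c a * betaIntegrand p q (Fin.cons a (Fin.cons (q * b) c) : Fin 6 → ℂ) z =
    b * theta p (a * b⁻¹) * (shiftPrimitive p q (Fin.cons a (Fin.cons b c) : Fin 6 → ℂ) z +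
      shiftPrimitive p q (Fin.cons a (Fin.cons b c) : Fin 6 → ℂ) z⁻¹) := by
  have hz0 : z ≠ 0 := norm_pos_iff.1 (hz ▸ one_pos)
  have ht := cons_norm_lt_one ha (cons_norm_lt_one hb hc)
  have htheta : theta q ((z⁻¹ ^ 2)⁻¹) = -z ^ 2 * theta q ((z ^ 2)⁻¹) := by
    rw [inv_pow, theta_inv hq (by positivity), inv_inv]
  have hdefect := thetaDefect_eq_zero hp hp0 ha0 hb0 hc0 habc hab hz0
  rw [thetaDefect] at hdefect
  rw [shiftPrimitive_eq hp hq hq0 ht hz, shiftPrimitive_eq hp hq hq0 ht (by simp [hz]), htheta]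
  simp only [betaIntegrand, betaWeight, egammaPair_inv, Fin.prod_univ_succ (n := 5),
    Fin.prod_univ_succ (n := 4), Fin.cons_zero, Fin.cons_succ, egammaPair_mul_left hp hq hq0 ha hz,
    egammaPair_mul_left hp hq hq0 hb hz, inv_inv]
  linear_combination (egammaPair p q a z * egammaPair p q b z *
    (∏ i, egammaPair p q (c i) z) * theta q ((z ^ 2)⁻¹)) * hdefect

lemma thetaProd_mul_ellipticBeta_mul_left :
    thetaProd p c b * ellipticBeta p q (Fin.cons (q * a) (Fin.cons b c) : Fin 6 → ℂ) =
      thetaProd p c a * ellipticBeta p q (Fin.cons a (Fin.cons (q * b) c) : Fin 6 → ℂ) := by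
  set t : Fin 6 → ℂ := Fin.cons a (Fin.cons b c)
  have ht0 (i : Fin 6) : t i ≠ 0 := cons_ne_zero ha0 (cons_ne_zero hb0 hc0) i
  have ht (i : Fin 6) : ‖t i‖ < 1 := cons_norm_lt_one ha (cons_norm_lt_one hb hc) i
  have hmul {x : ℂ} (hx : ‖x‖ < 1) : ‖q * x‖ < 1 := norm_mul_lt_one hq hx.le
  have hint := circleIntegrable_shiftPrimitive hp hq hq0 ht0 ht
  have hint_inv : CircleIntegrable (fun z => shiftPrimitive p q t z⁻¹) 0 1 :=
    circleIntegrable_of_differentiableAt fun z hz =>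
      (differentiableAt_shiftPrimitive hp hq hq0 ht0 ht (by simp [hz])
        (by simpa [hz] using hq.le)).comp z (differentiableAt_inv (norm_pos_iff.1 (hz ▸ one_pos)))
  have hint_left (x : ℂ) : CircleIntegrable
      (fun z => x * betaIntegrand p q (Fin.cons (q * a) (Fin.cons b c) : Fin 6 → ℂ) z) 0 1 :=
    (circleIntegrable_betaIntegrand hp hq
      (cons_ne_zero (mul_ne_zero hq0 ha0) (cons_ne_zero hb0 hc0))
      (cons_norm_lt_one (hmul ha) (cons_norm_lt_one hb hc))).const_fun_smul
  have hint_right (x : ℂ) : CircleIntegrable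
      (fun z => x * betaIntegrand p q (Fin.cons a (Fin.cons (q * b) c) : Fin 6 → ℂ) z) 0 1 :=
    (circleIntegrable_betaIntegrand hp hq
      (cons_ne_zero ha0 (cons_ne_zero (mul_ne_zero hq0 hb0) hc0))
      (cons_norm_lt_one ha (cons_norm_lt_one (hmul hb) hc))).const_fun_smul
  have havg := circleAverage_congr_sphere (c := 0) (R := 1) fun z hz =>
    betaIntegrand_shift_sub hp hp0 hq hq0 ha0 ha hb0 hb hc0 hc habc hab (z := z) (by simpa using hz)
  rw [circleAverage_fun_sub (hint_left _) (hint_right _),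
    circleAverage_const_mul, circleAverage_const_mul, circleAverage_const_mul,
    circleAverage_fun_add hint hint_inv, circleAverage_zero_one_congr_inv,
    circleAverage_shiftPrimitive hp hq hq0 ht0 ht, add_zero, mul_zero, sub_eq_zero] at havg
  exact havg

end Shift

/-! ### Holomorphic dependence on parameters -/

section ParametricIntegral

variable {E : Type*} [NormedAddCommGroup E] [NormedSpace ℂ E] {G : ℂ → ℝ → E} {U : Set ℂ}

lemma stronglyMeasurable_deriv_of_continuous (hU : IsOpen U) (hG : ∀ x ∈ U, Continuous (G x))
    (hd : ∀ u, DifferentiableOn ℂ (fun x => G x u) U) {x₀ : ℂ} (hx₀ : x₀ ∈ U) :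
    MeasureTheory.StronglyMeasurable fun u => deriv (fun x => G x u) x₀ := by
  obtain ⟨h, hmem, hlim⟩ := exists_seq_forall_of_frequently
    (l := 𝓝[≠] (0 : ℂ)) (p := fun h => x₀ + h ∈ U) (Eventually.frequently <|
      mem_nhdsWithin_of_mem_nhds <| (continuous_const_add x₀).continuousAt.preimage_mem_nhds
        (hU.mem_nhds (by simpa using hx₀)))
  refine stronglyMeasurable_of_tendsto atTop
    (f := fun n u => (h n)⁻¹ • (G (x₀ + h n) u - G x₀ u)) (fun n => ?_)
    (tendsto_pi_nhds.2 fun u => ?_)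
  · exact (((hG _ (hlim n)).sub (hG _ hx₀)).const_smul (h n)⁻¹).stronglyMeasurable
  · exact ((hd u).differentiableAt (hU.mem_nhds hx₀)).hasDerivAt.tendsto_slope_zero.comp hmem

lemma differentiableOn_intervalIntegral (hU : IsOpen U)
    (hG : ContinuousOn (Function.uncurry G) (U ×ˢ Set.univ))
    (hd : ∀ u, DifferentiableOn ℂ (fun x => G x u) U) (a b : ℝ) :
    DifferentiableOn ℂ (fun x => ∫ u in a..b, G x u) U := by
  intro x₀ hx₀
  obtain ⟨r, hr, hrU⟩ := Metric.nhds_basis_closedBall.mem_iff.1 (hU.mem_nhds hx₀)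
  have hcont (x : ℂ) (hx : x ∈ U) : Continuous (G x) :=
    hG.comp_continuous (by fun_prop : Continuous fun u => (x, u)) fun u => ⟨hx, trivial⟩
  obtain ⟨C, hC⟩ := ((isCompact_closedBall x₀ r).prod
    (isCompact_uIcc (a := a) (b := b))).exists_bound_of_continuousOn
      (hG.mono (Set.prod_mono hrU (Set.subset_univ _)))
  have hsub {x : ℂ} (hx : x ∈ Metric.ball x₀ (r / 2)) :
      Metric.closedBall x (r / 2) ⊆ Metric.closedBall x₀ r :=
    Metric.closedBall_subset_closedBall' (by linarith [Metric.mem_ball.1 hx])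
  refine (intervalIntegral.hasDerivAt_integral_of_dominated_loc_of_deriv_le
    (F' := fun x u => deriv (fun x => G x u) x) (bound := fun _ => C / (r / 2))
    (Metric.ball_mem_nhds x₀ (half_pos hr)) ?_ ((hcont x₀ hx₀).intervalIntegrable _ _)
    (stronglyMeasurable_deriv_of_continuous hU hcont hd hx₀).aestronglyMeasurable
    ?_ (continuous_const.intervalIntegrable _ _) ?_).2.differentiableAt.differentiableWithinAt
  · filter_upwards [hU.mem_nhds hx₀] with x hx using (hcont x hx).aestronglyMeasurable
  · refine Eventually.of_forall fun u hu x hx =>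
      norm_deriv_le_of_forall_mem_sphere_norm_le (half_pos hr) ?_ fun y hy => ?_
    · exact (hd u).diffContOnCl_ball ((hsub hx).trans hrU)
    · exact hC (y, u) ⟨hsub hx (Metric.sphere_subset_closedBall hy), Set.uIoc_subset_uIcc hu⟩
  · refine Eventually.of_forall fun u _ x hx =>
      ((hd u).differentiableAt (hU.mem_nhds (hrU (hsub hx ?_)))).hasDerivAt
    exact Metric.mem_closedBall_self (half_pos hr).le

lemma differentiableOn_circleAverage {F : ℂ → ℂ → ℂ} (hU : IsOpen U)
    (hF : ContinuousOn (Function.uncurry F) (U ×ˢ Metric.sphere 0 1))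
    (hd : ∀ z ∈ Metric.sphere (0 : ℂ) 1, DifferentiableOn ℂ (fun x => F x z) U) :
    DifferentiableOn ℂ (fun x => circleAverage (F x) 0 1) U := by
  have hmem (u : ℝ) : circleMap 0 1 u ∈ Metric.sphere (0 : ℂ) 1 :=
    circleMap_mem_sphere 0 zero_le_one u
  refine (differentiableOn_intervalIntegral hU ?_ (fun u => hd _ (hmem u)) 0 (2 * π)).const_smul
    (2 * π)⁻¹
  exact hF.comp (f := fun y : ℂ × ℝ => (y.1, circleMap 0 1 y.2)) (by fun_prop)
    fun y hy => ⟨hy.1, hmem y.2⟩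

end ParametricIntegral

section

variable {ι : Type*} [Fintype ι]

lemma differentiableOn_ellipticBeta_comp (hp : ‖p‖ < 1) (hq : ‖q‖ < 1) {t : ℂ → ι → ℂ} {U : Set ℂ}
    (hU : IsOpen U) (ht : DifferentiableOn ℂ t U) (ht0 : ∀ x ∈ U, ∀ i, t x i ≠ 0)
    (ht1 : ∀ x ∈ U, ∀ i, ‖t x i‖ < 1) : DifferentiableOn ℂ (fun x => ellipticBeta p q (t x)) U := by
  have hjoint {x z : ℂ} (hx : x ∈ U) (hz : ‖z‖ = 1) :
      DifferentiableAt ℂ (fun y : ℂ × ℂ => betaIntegrand p q (t y.1) y.2) (x, z) :=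
    (differentiableAt_uncurry_betaIntegrand hp hq (ht0 x hx) (ht1 x hx) hz).comp (x, z)
      (f := fun y : ℂ × ℂ => (t y.1, y.2))
      (((ht.differentiableAt (hU.mem_nhds hx)).comp (x, z) differentiableAt_fst).prodMk
        differentiableAt_snd)
  refine differentiableOn_circleAverage (F := fun x => betaIntegrand p q (t x)) hU
    (fun y hy => ?_) fun z hz x hx => ?_
  · exact (hjoint hy.1 (mem_sphere_zero_iff_norm.1 hy.2)).continuousAt.continuousWithinAt
  · exact ((hjoint hx (mem_sphere_zero_iff_norm.1 hz)).comp x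
      (f := fun x => (x, z)) (by fun_prop)).differentiableWithinAt

end

/-! ### The normalised integral -/

/-- The product of the elliptic gamma functions `Γ(tᵢtⱼ; p, q)` over all pairs `i < j`, to which the
elliptic beta integral is proportional. -/
noncomputable def egammaProd (p q : ℂ) {n : ℕ} (t : Fin n → ℂ) : ℂ :=
  ∏ i, ∏ j ∈ Finset.Ioi i, egamma (t i * t j) p q

lemma egammaProd_cons (p q a : ℂ) {n : ℕ} (t : Fin n → ℂ) :
    egammaProd p q (Fin.cons a t : Fin (n + 1) → ℂ) =
      (∏ i, egamma (a * t i) p q) * egammaProd p q t := by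
  simp [egammaProd, Fin.prod_univ_succ, Fin.prod_Ioi_succ]

lemma differentiableAt_egammaProd (hp : ‖p‖ < 1) (hq : ‖q‖ < 1) {n : ℕ} {t : Fin n → ℂ}
    (ht0 : ∀ i, t i ≠ 0) (ht : ∀ i, ‖t i‖ < 1) : DifferentiableAt ℂ (egammaProd p q) t :=
  differentiableAt_finset_prod fun i _ => differentiableAt_finset_prod fun j _ =>
    differentiableAt_egamma_comp hp hq (φ := fun t : Fin n → ℂ => t i * t j) (by fun_prop)
      (mul_ne_zero (ht0 i) (ht0 j)) (norm_mul_lt_one (ht i) (ht j).le)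

lemma norm_prod_lt_one {ι : Type*} {s : Finset ι} {t : ι → ℂ} (hs : s.Nonempty)
    (ht : ∀ i, ‖t i‖ < 1) : ‖∏ i ∈ s, t i‖ < 1 := by
  obtain ⟨i, hi⟩ := hs
  classical
  rw [← Finset.mul_prod_erase s t hi]
  refine norm_mul_lt_one (ht i) ?_
  rw [norm_prod]
  exact Finset.prod_le_one (fun _ _ => norm_nonneg _) fun j _ => (ht j).le

/-- The parameters of an elliptic beta integral whose contour is the unit circle: they lie in the
open unit disc and satisfy the balancing condition `∏ tᵢ = pq`. -/
structure IsBalanced (p q : ℂ) {ι : Type*} [Fintype ι] (t : ι → ℂ) : Prop where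
  norm_lt_one (i : ι) : ‖t i‖ < 1
  prod_eq : ∏ i, t i = p * q

namespace IsBalanced

section

variable {ι : Type*} [Fintype ι] {t : ι → ℂ}

lemma ne_zero (ht : IsBalanced p q t) (hp0 : p ≠ 0) (hq0 : q ≠ 0) (i : ι) : t i ≠ 0 :=
  Finset.prod_ne_zero_iff.1 (ht.prod_eq ▸ mul_ne_zero hp0 hq0) i (Finset.mem_univ i)

lemma norm_mul_lt_norm_prod (ht : IsBalanced p q t) (hp0 : p ≠ 0) (hq0 : q ≠ 0) {s : Finset ι}
    (hs : s ≠ Finset.univ) : ‖p * q‖ < ‖∏ i ∈ s, t i‖ := by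
  classical
  rw [← ht.prod_eq, ← Finset.prod_mul_prod_compl s t, norm_mul]
  refine mul_lt_of_lt_one_right (norm_pos_iff.2 ?_) (norm_prod_lt_one ?_ ht.norm_lt_one)
  · exact Finset.prod_ne_zero_iff.2 fun i _ => ht.ne_zero hp0 hq0 i
  · rwa [Finset.nonempty_iff_ne_empty, Ne, Finset.compl_eq_empty_iff]

end

lemma egammaProd_ne_zero (hp : ‖p‖ < 1) (hp0 : p ≠ 0) (hq : ‖q‖ < 1) (hq0 : q ≠ 0) {n : ℕ}
    {t : Fin n → ℂ} (ht : IsBalanced p q t) (hn : 2 < n) : egammaProd p q t ≠ 0 := by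
  refine Finset.prod_ne_zero_iff.2 fun i _ => Finset.prod_ne_zero_iff.2 fun j hj => ?_
  have hij : i ≠ j := (Finset.mem_Ioi.1 hj).ne
  have hs : ({i, j} : Finset (Fin n)) ≠ Finset.univ := by
    intro h
    have := congrArg Finset.card h
    rw [Finset.card_pair hij, Finset.card_fin] at this
    omega
  rw [← Finset.prod_pair hij]
  exact egamma_ne_zero hp hq (norm_prod_lt_one (Finset.insert_nonempty _ _) ht.norm_lt_one)
    (ht.norm_mul_lt_norm_prod hp0 hq0 hs)

end IsBalanced

/-- The elliptic beta integral divided by its expected value up to a constant; the evaluation of the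
integral says that this ratio is the same for all balanced parameters. -/
noncomputable def betaRatio (p q : ℂ) {n : ℕ} (t : Fin n → ℂ) : ℂ :=
  ellipticBeta p q t / egammaProd p q t

lemma betaRatio_cons_cons_cons_swap (p q a b c : ℂ) {n : ℕ} (t : Fin n → ℂ) :
    betaRatio p q (Fin.cons a (Fin.cons b (Fin.cons c t)) : Fin (n + 3) → ℂ) =
      betaRatio p q (Fin.cons a (Fin.cons c (Fin.cons b t)) : Fin (n + 3) → ℂ) := by
  have hβ (z : ℂ) : betaIntegrand p q (Fin.cons a (Fin.cons b (Fin.cons c t)) : Fin (n + 3) → ℂ) z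
      = betaIntegrand p q (Fin.cons a (Fin.cons c (Fin.cons b t)) : Fin (n + 3) → ℂ) z := by
    simp only [betaIntegrand, Fin.prod_univ_succ, Fin.cons_zero, Fin.cons_succ]
    ring
  rw [betaRatio, betaRatio, ellipticBeta, funext hβ, ← ellipticBeta]
  simp only [egammaProd_cons, Fin.prod_univ_succ, Fin.cons_zero, Fin.cons_succ, mul_comm b c]
  ring

lemma differentiableOn_betaRatio_comp (hp : ‖p‖ < 1) (hp0 : p ≠ 0) (hq : ‖q‖ < 1) (hq0 : q ≠ 0)
    {n : ℕ} (hn : 2 < n) {t : ℂ → Fin n → ℂ} {U : Set ℂ} (hU : IsOpen U)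
    (ht : DifferentiableOn ℂ t U) (hbal : ∀ x ∈ U, IsBalanced p q (t x)) :
    DifferentiableOn ℂ (fun x => betaRatio p q (t x)) U := by
  have ht0 (x : ℂ) (hx : x ∈ U) := (hbal x hx).ne_zero hp0 hq0
  have ht1 (x : ℂ) (hx : x ∈ U) := (hbal x hx).norm_lt_one
  refine (differentiableOn_ellipticBeta_comp hp hq hU ht ht0 ht1).div (fun x hx => ?_)
    fun x hx => (hbal x hx).egammaProd_ne_zero hp hp0 hq hq0 hn
  exact (differentiableAt_egammaProd hp hq (ht0 x hx) (ht1 x hx)).comp_differentiableWithinAt x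
    (ht x hx)

lemma prod_egamma_mul_left (hp : ‖p‖ < 1) (hq : ‖q‖ < 1) (hq0 : q ≠ 0) {ι : Type*} [Fintype ι]
    {a : ℂ} {c : ι → ℂ} (ha : ‖a‖ < 1) (hc : ∀ i, ‖c i‖ < 1) :
    ∏ i, egamma (q * a * c i) p q = thetaProd p c a * ∏ i, egamma (a * c i) p q := by
  rw [thetaProd, ← Finset.prod_mul_distrib]
  refine Finset.prod_congr rfl fun i _ => ?_
  rw [mul_assoc, egamma_mul_left hp hq hq0 (norm_mul_lt_one ha (hc i).le), mul_comm a (c i)]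

lemma IsBalanced.cons_cons_mul_inv {n : ℕ} {a b x : ℂ} {c : Fin n → ℂ}
    (h : IsBalanced p q (Fin.cons a (Fin.cons b c) : Fin (n + 2) → ℂ))
    (hx : x ∈ openAnnulus ‖a * b‖ 1) :
    IsBalanced p q (Fin.cons (a * b * x⁻¹) (Fin.cons x c) : Fin (n + 2) → ℂ) := by
  have hx_pos : 0 < ‖x‖ := (norm_nonneg _).trans_lt hx.1
  refine ⟨cons_norm_lt_one ?_ (cons_norm_lt_one hx.2 fun i => h.norm_lt_one i.succ.succ), ?_⟩
  · rw [← div_eq_mul_inv, norm_div, div_lt_one hx_pos]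
    exact hx.1
  · rw [← h.prod_eq, Fin.prod_cons, Fin.prod_cons, Fin.prod_cons, Fin.prod_cons, ← mul_assoc,
      inv_mul_cancel_right₀ (norm_pos_iff.1 hx_pos), mul_assoc]

section

variable (hp : ‖p‖ < 1) (hp0 : p ≠ 0) (hq : ‖q‖ < 1) (hq0 : q ≠ 0) {a b : ℂ} {c : Fin 4 → ℂ}
include hp hp0 hq hq0

lemma betaRatio_mul_left (ha : ‖a‖ < 1) (hb : ‖b‖ < 1) (hc : ∀ i, ‖c i‖ < 1)
    (habc : a * b * ∏ i, c i = p) :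
    betaRatio p q (Fin.cons (q * a) (Fin.cons b c) : Fin 6 → ℂ) =
      betaRatio p q (Fin.cons a (Fin.cons (q * b) c) : Fin 6 → ℂ) := by
  have hab0 : a * b ≠ 0 := left_ne_zero_of_mul (habc ▸ hp0)
  have hc0 (i : Fin 4) : c i ≠ 0 :=
    Finset.prod_ne_zero_iff.1 (right_ne_zero_of_mul (habc ▸ hp0)) i (Finset.mem_univ i)
  have htheta : theta p (a * b) ≠ 0 := by
    refine theta_ne_zero hp (norm_mul_lt_one ha hb.le) ?_
    rw [← habc, norm_mul]
    exact mul_lt_of_lt_one_right (norm_pos_iff.2 hab0) (norm_prod_lt_one Finset.univ_nonempty hc)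
  set X := egamma (q * (a * b)) p q * (∏ i, egamma (a * c i) p q) * (∏ i, egamma (b * c i) p q) *
    egammaProd p q c with hX
  have hprod_a : egammaProd p q (Fin.cons (q * a) (Fin.cons b c) : Fin 6 → ℂ) =
      thetaProd p c a * X := by
    rw [egammaProd_cons, egammaProd_cons, Fin.prod_univ_succ, Fin.cons_zero]
    simp only [Fin.cons_succ]
    rw [prod_egamma_mul_left hp hq hq0 ha hc, mul_assoc q a b, hX]
    ring
  have hprod_b : egammaProd p q (Fin.cons a (Fin.cons (q * b) c) : Fin 6 → ℂ) =
      thetaProd p c b * X := by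
    rw [egammaProd_cons, egammaProd_cons, Fin.prod_univ_succ, Fin.cons_zero]
    simp only [Fin.cons_succ]
    rw [prod_egamma_mul_left hp hq hq0 hb hc, mul_left_comm a q b, hX]
    ring
  have hbal_a : IsBalanced p q (Fin.cons (q * a) (Fin.cons b c) : Fin 6 → ℂ) :=
    ⟨cons_norm_lt_one (norm_mul_lt_one hq ha.le) (cons_norm_lt_one hb hc), by
      rw [Fin.prod_cons, Fin.prod_cons, ← habc]; ring⟩
  have hbal_b : IsBalanced p q (Fin.cons a (Fin.cons (q * b) c) : Fin 6 → ℂ) :=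
    ⟨cons_norm_lt_one ha (cons_norm_lt_one (norm_mul_lt_one hq hb.le) hc), by
      rw [Fin.prod_cons, Fin.prod_cons, ← habc]; ring⟩
  have hne_a := hbal_a.egammaProd_ne_zero hp hp0 hq hq0 (by norm_num)
  have hne_b := hbal_b.egammaProd_ne_zero hp hp0 hq hq0 (by norm_num)
  rw [betaRatio, betaRatio, div_eq_div_iff hne_a hne_b, hprod_a, hprod_b]
  linear_combination X * thetaProd_mul_ellipticBeta_mul_left hp hp0 hq hq0
    (left_ne_zero_of_mul hab0) ha (right_ne_zero_of_mul hab0) hb hc0 hc habc htheta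

lemma betaRatio_cons_cons_mul_inv_mul_left
    (h : IsBalanced p q (Fin.cons a (Fin.cons b c) : Fin 6 → ℂ)) {x : ℂ}
    (hqx : ‖a * b‖ < ‖q * x‖) (hx : ‖x‖ < 1) :
    betaRatio p q (Fin.cons (a * b * (q * x)⁻¹) (Fin.cons (q * x) c) : Fin 6 → ℂ) =
      betaRatio p q (Fin.cons (a * b * x⁻¹) (Fin.cons x c) : Fin 6 → ℂ) := by
  have hbal := h.cons_cons_mul_inv (x := q * x) ⟨hqx, norm_mul_lt_one hq hx.le⟩
  have ha : ‖a * b * (q * x)⁻¹‖ < 1 := hbal.norm_lt_one 0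
  have hc (i : Fin 4) : ‖c i‖ < 1 := h.norm_lt_one i.succ.succ
  have habc : a * b * (q * x)⁻¹ * x * ∏ i, c i = p := by
    refine mul_left_cancel₀ hq0 ?_
    rw [mul_comm q p, ← hbal.prod_eq, Fin.prod_cons, Fin.prod_cons]
    ring
  rw [← betaRatio_mul_left hp hp0 hq hq0 ha hx hc habc]
  congr 2
  field_simp

lemma betaRatio_eq_of_mul_eq {a' b' : ℂ}
    (h : IsBalanced p q (Fin.cons a (Fin.cons b c) : Fin 6 → ℂ)) (ha' : ‖a'‖ < 1) (hb' : ‖b'‖ < 1)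
    (hab : a * b = a' * b') (habq : ‖a * b‖ < ‖q‖) :
    betaRatio p q (Fin.cons a (Fin.cons b c) : Fin 6 → ℂ) =
      betaRatio p q (Fin.cons a' (Fin.cons b' c) : Fin 6 → ℂ) := by
  have ha : ‖a‖ < 1 := h.norm_lt_one 0
  have hb : ‖b‖ < 1 := h.norm_lt_one 1
  have hb0 : b ≠ 0 := h.ne_zero hp0 hq0 1
  have hab0 : a * b ≠ 0 := mul_ne_zero (h.ne_zero hp0 hq0 0) hb0
  have hb0' : b' ≠ 0 := right_ne_zero_of_mul (hab ▸ hab0)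
  have hx0 {x : ℂ} (hx : ‖a * b‖ < ‖x‖) : x ≠ 0 := norm_pos_iff.1 ((norm_nonneg _).trans_lt hx)
  have hmem {u v : ℂ} (hu : ‖u‖ < 1) (hv : ‖v‖ < 1) (huv : a * b = u * v) :
      v ∈ openAnnulus ‖a * b‖ 1 := by
    refine ⟨?_, hv⟩
    rw [huv, norm_mul]
    exact mul_lt_of_lt_one_left (norm_pos_iff.2 (right_ne_zero_of_mul (huv ▸ hab0))) hu
  have hdiff : DifferentiableOn ℂ (fun x => (Fin.cons (a * b * x⁻¹) (Fin.cons x c) : Fin 6 → ℂ))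
      (openAnnulus ‖a * b‖ 1) := by
    refine differentiableOn_pi.2 (Fin.cases ?_ (Fin.cases ?_ fun i => ?_)) <;>
      simp only [Fin.cons_zero, Fin.cons_succ]
    · exact fun x hx => ((differentiableAt_inv (hx0 hx.1)).const_mul _).differentiableWithinAt
    · exact differentiableOn_id
    · exact differentiableOn_const _
  have hconst := apply_eq_of_mul_periodic_openAnnulus (norm_pos_iff.2 hq0) hq
    (norm_pos_iff.2 hab0) (by rwa [mul_one]) (differentiableOn_betaRatio_comp hp hp0 hq hq0
      (by norm_num) (isOpen_openAnnulus _ _) hdiff fun x => h.cons_cons_mul_inv)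
    (fun x => betaRatio_cons_cons_mul_inv_mul_left hp hp0 hq hq0 h) (hmem ha hb rfl)
    (hmem ha' hb' hab)
  rwa [mul_inv_cancel_right₀ hb0, hab, mul_inv_cancel_right₀ hb0'] at hconst

end

/-! ### The pinching limit -/

section ApproximateIdentity

lemma norm_circleAverage_le_of_norm_le {E : Type*} [NormedAddCommGroup E] [NormedSpace ℝ E]
    {f : ℂ → E} {g : ℂ → ℝ} {c : ℂ} {R : ℝ} (hg : CircleIntegrable g c R)
    (h : ∀ z ∈ Metric.sphere c |R|, ‖f z‖ ≤ g z) : ‖circleAverage f c R‖ ≤ circleAverage g c R := by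
  rw [circleAverage_def, circleAverage_def, norm_smul, smul_eq_mul,
    Real.norm_of_nonneg (by positivity)]
  gcongr
  exact intervalIntegral.norm_integral_le_of_norm_le Real.two_pi_pos.le
    (Eventually.of_forall fun u _ => h _ (circleMap_mem_sphere' c R u)) hg

lemma exists_norm_le_add_mul {X E : Type*} [TopologicalSpace X] [T2Space X] [NormedAddCommGroup E]
    {K : Set X} (hK : IsCompact K) {f : X → E} {g : X → ℝ} (hf : ContinuousOn f K)
    (hg : ContinuousOn g K) (hg0 : ∀ x ∈ K, 0 ≤ g x) (hfg : ∀ x ∈ K, g x = 0 → f x = 0) {ε : ℝ}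
    (hε : 0 < ε) : ∃ C, 0 ≤ C ∧ ∀ x ∈ K, ‖f x‖ ≤ ε + C * g x := by
  set L := K ∩ (fun x => ‖f x‖) ⁻¹' Set.Ici ε
  have hL : IsCompact L :=
    hK.of_isClosed_subset (hf.norm.preimage_isClosed_of_isClosed hK.isClosed isClosed_Ici)
      Set.inter_subset_left
  have hg_pos : ∀ x ∈ L, 0 < g x := by
    rintro x ⟨hxK, hxε⟩
    refine (hg0 x hxK).lt_of_ne' fun h => ?_
    simp only [Set.mem_preimage, hfg x hxK h, norm_zero, Set.mem_Ici] at hxε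
    exact hε.not_ge hxε
  obtain ⟨C, hC⟩ := hL.bddAbove_image <| (hf.norm.mono Set.inter_subset_left).div
    (hg.mono Set.inter_subset_left) fun x hx => (hg_pos x hx).ne'
  refine ⟨max C 0, le_max_right _ _, fun x hx => ?_⟩
  have hg_nonneg : 0 ≤ max C 0 * g x := mul_nonneg (le_max_right _ _) (hg0 x hx)
  rcases lt_or_ge ‖f x‖ ε with h | h
  · linarith
  · have hx_pos := hg_pos x ⟨hx, h⟩
    have := (div_le_iff₀ hx_pos).1 ((hC ⟨x, ⟨hx, h⟩, rfl⟩).trans (le_max_left C 0))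
    linarith

lemma tendstoUniformlyOn_of_continuousAt_uncurry {X Y Z : Type*} [TopologicalSpace X]
    [TopologicalSpace Y] [UniformSpace Z] {F : X → Y → Z} {x₀ : X} {K : Set Y} (hK : IsCompact K)
    (hF : ∀ y ∈ K, ContinuousAt (Function.uncurry F) (x₀, y)) :
    TendstoUniformlyOn F (F x₀) (𝓝 x₀) K := by
  rw [← tendstoLocallyUniformlyOn_iff_tendstoUniformlyOn_of_compact hK,
    tendstoLocallyUniformlyOn_iff_forall_tendsto]
  intro y hy
  have hleft : Tendsto (fun x : X × Y => F x₀ x.2) (𝓝 x₀ ×ˢ 𝓝[K] y) (𝓝 (F x₀ y)) :=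
    (hF y hy).tendsto.comp (tendsto_const_nhds.prodMk_nhds (tendsto_snd.mono_right inf_le_left))
  have hright : Tendsto (fun x : X × Y => F x.1 x.2) (𝓝 x₀ ×ˢ 𝓝[K] y) (𝓝 (F x₀ y)) :=
    (hF y hy).tendsto.comp (tendsto_fst.prodMk_nhds (tendsto_snd.mono_right inf_le_left))
  exact (hleft.prodMk_nhds hright).mono_right (nhds_le_uniformity _)

end ApproximateIdentity

section PinchKernel

variable {ρ : ℝ} {z : ℂ}

/-- The Poisson kernel of the unit disc pulled back along `z ↦ -z ^ 2`: on the unit circle it has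
average `1`, and as `ρ → 1` it concentrates at `z = ±I`, the points where the contour is pinched. -/
noncomputable def pinchKernel (ρ : ℝ) (z : ℂ) : ℝ := (1 - ρ ^ 4) / ‖1 + ρ ^ 2 * z ^ 2‖ ^ 2

lemma pinchKernel_nonneg (hρ0 : 0 ≤ ρ) (hρ : ρ < 1) (z : ℂ) : 0 ≤ pinchKernel ρ z :=
  div_nonneg (sub_nonneg.2 (pow_le_one₀ hρ0 hρ.le)) (by positivity)

lemma one_sub_sq_le_norm_one_add_mul_sq (hz : ‖z‖ ≤ 1) : 1 - ρ ^ 2 ≤ ‖1 + ρ ^ 2 * z ^ 2‖ := by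
  have hle : ‖(ρ : ℂ) ^ 2 * z ^ 2‖ ≤ ρ ^ 2 := by
    rw [norm_mul, norm_pow, norm_pow, Complex.norm_real, Real.norm_eq_abs, sq_abs]
    exact mul_le_of_le_one_right (sq_nonneg ρ) (pow_le_one₀ (norm_nonneg z) hz)
  have := norm_sub_norm_le (1 : ℂ) (-(ρ ^ 2 * z ^ 2))
  rw [norm_one, norm_neg, sub_neg_eq_add] at this
  linarith

lemma one_add_mul_sq_ne_zero (hρ0 : 0 ≤ ρ) (hρ : ρ < 1) (hz : ‖z‖ ≤ 1) :
    1 + (ρ : ℂ) ^ 2 * z ^ 2 ≠ 0 :=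
  norm_pos_iff.1 ((sub_pos.2 (pow_lt_one₀ hρ0 hρ two_ne_zero)).trans_le
    (one_sub_sq_le_norm_one_add_mul_sq hz))

lemma continuousOn_pinchKernel (hρ0 : 0 ≤ ρ) (hρ : ρ < 1) :
    ContinuousOn (pinchKernel ρ) (Metric.sphere 0 1) :=
  continuousOn_const.div (by fun_prop) fun z hz => pow_ne_zero 2 <| norm_ne_zero_iff.2 <|
    one_add_mul_sq_ne_zero hρ0 hρ (mem_sphere_zero_iff_norm.1 hz).le

lemma circleIntegrable_pinchKernel (hρ0 : 0 ≤ ρ) (hρ : ρ < 1) :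
    CircleIntegrable (pinchKernel ρ) 0 1 :=
  (continuousOn_pinchKernel hρ0 hρ).circleIntegrable zero_le_one

lemma ofReal_pinchKernel (hz : ‖z‖ = 1) : (pinchKernel ρ z : ℂ) =
    (1 - ρ ^ 4) / ((1 + ρ ^ 2 * z ^ 2) * (1 + ρ ^ 2 * (z⁻¹) ^ 2)) := by
  rw [pinchKernel, Complex.inv_eq_conj hz]
  push_cast
  rw [← Complex.mul_conj']
  simp

lemma circleAverage_pinchKernel (hρ0 : 0 ≤ ρ) (hρ : ρ < 1) :
    circleAverage (pinchKernel ρ) 0 1 = 1 := by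
  set f : ℂ → ℂ := fun z => herglotzRieszKernel 0 (-(ρ ^ 2 * z ^ 2)) 1 with hf
  have hf_diff (z : ℂ) (hz : ‖z‖ ≤ 1) : DifferentiableAt ℂ f z := by
    simp only [hf, herglotzRieszKernel, sub_zero, sub_neg_eq_add]
    exact DifferentiableAt.fun_div (by fun_prop) (by fun_prop) (one_add_mul_sq_ne_zero hρ0 hρ hz)
  have hre : Set.EqOn (Complex.reCLM ∘ f) (pinchKernel ρ) (Metric.sphere 0 |1|) := by
    intro z hz
    rw [abs_one, mem_sphere_zero_iff_norm] at hz
    change (Complex.re ∘ herglotzRieszKernel 0 (-(ρ ^ 2 * z ^ 2))) 1 = _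
    rw [← poissonKernel_eq_re_herglotzRieszKernel]
    simp [poissonKernel, pinchKernel, hz, ← pow_mul]
  rw [← circleAverage_congr_sphere hre, ContinuousLinearMap.circleAverage_comp_comm,
    DiffContOnCl.circleAverage]
  · simp [hf, herglotzRieszKernel]
  · refine DifferentiableOn.diffContOnCl fun z hz => (hf_diff z ?_).differentiableWithinAt
    simpa using Metric.closure_ball_subset_closedBall hz
  · exact circleIntegrable_of_differentiableAt fun z hz => hf_diff z hz.le

lemma pinchKernel_mul_sq_le (hρ0 : 0 ≤ ρ) (hρ : ρ < 1) (hz : ‖z‖ ≤ 1) :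
    pinchKernel ρ z * ‖1 + z ^ 2‖ ^ 2 ≤ 4 * (1 - ρ ^ 4) := by
  have hpos := norm_pos_iff.2 (one_add_mul_sq_ne_zero hρ0 hρ hz)
  have hle : ‖1 + z ^ 2‖ ≤ 2 * ‖1 + ρ ^ 2 * z ^ 2‖ := by
    have hsub : ‖((1 - ρ ^ 2 : ℝ) : ℂ) * z ^ 2‖ ≤ 1 - ρ ^ 2 := by
      have h0 : 0 ≤ 1 - ρ ^ 2 := sub_nonneg.2 (pow_le_one₀ hρ0 hρ.le)
      rw [norm_mul, norm_pow, Complex.norm_real, Real.norm_of_nonneg h0]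
      exact mul_le_of_le_one_right h0 (pow_le_one₀ (norm_nonneg z) hz)
    calc ‖1 + z ^ 2‖ = ‖1 + ρ ^ 2 * z ^ 2 + ((1 - ρ ^ 2 : ℝ) : ℂ) * z ^ 2‖ := by
          congr 1; push_cast; ring
      _ ≤ ‖1 + ρ ^ 2 * z ^ 2‖ + ‖1 + ρ ^ 2 * z ^ 2‖ :=
          norm_add_le_of_le le_rfl (hsub.trans (one_sub_sq_le_norm_one_add_mul_sq hz))
      _ = 2 * ‖1 + ρ ^ 2 * z ^ 2‖ := (two_mul _).symm
  calc pinchKernel ρ z * ‖1 + z ^ 2‖ ^ 2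
      ≤ pinchKernel ρ z * (2 * ‖1 + ρ ^ 2 * z ^ 2‖) ^ 2 := by
        gcongr
        exact pinchKernel_nonneg hρ0 hρ z
    _ = 4 * (1 - ρ ^ 4) := by
        rw [pinchKernel]
        field_simp
        ring

lemma norm_circleAverage_pinchKernel_mul_sub_le (hρ0 : 0 ≤ ρ) (hρ : ρ < 1) {φ : ℂ → ℂ} {c : ℂ}
    {ε C : ℝ} (hC : 0 ≤ C) (hφ : CircleIntegrable (fun z => pinchKernel ρ z * φ z) 0 1)
    (h : ∀ z, ‖z‖ = 1 → ‖φ z - c‖ ≤ ε + C * ‖1 + z ^ 2‖ ^ 2) :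
    ‖circleAverage (fun z => pinchKernel ρ z * φ z) 0 1 - c‖ ≤ ε + C * (4 * (1 - ρ ^ 4)) := by
  have hK := circleIntegrable_pinchKernel hρ0 hρ
  have hKc : CircleIntegrable (fun z => c * (pinchKernel ρ z : ℂ)) 0 1 :=
    (continuousOn_const.mul (Complex.continuous_ofReal.comp_continuousOn
      (continuousOn_pinchKernel hρ0 hρ))).circleIntegrable zero_le_one
  have havg : circleAverage (fun z => (pinchKernel ρ z : ℂ)) 0 1 = 1 :=
    (Complex.ofRealCLM.circleAverage_comp_comm hK).trans (by
      rw [circleAverage_pinchKernel hρ0 hρ, Complex.ofRealCLM_apply, ofReal_one])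
  have hε : CircleIntegrable (fun z => ε * pinchKernel ρ z) 0 1 := hK.const_smul
  have hbound : ∀ z ∈ Metric.sphere (0 : ℂ) |1|,
      ‖pinchKernel ρ z * φ z - c * (pinchKernel ρ z : ℂ)‖ ≤
        ε * pinchKernel ρ z + C * (4 * (1 - ρ ^ 4)) := by
    intro z hz
    rw [abs_one, mem_sphere_zero_iff_norm] at hz
    have hK0 := pinchKernel_nonneg hρ0 hρ z
    calc ‖pinchKernel ρ z * φ z - c * (pinchKernel ρ z : ℂ)‖
        = pinchKernel ρ z * ‖φ z - c‖ := by
          rw [mul_comm c, ← mul_sub, norm_mul, Complex.norm_real, Real.norm_of_nonneg hK0]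
      _ ≤ pinchKernel ρ z * (ε + C * ‖1 + z ^ 2‖ ^ 2) := by gcongr; exact h z hz
      _ = ε * pinchKernel ρ z + C * (pinchKernel ρ z * ‖1 + z ^ 2‖ ^ 2) := by ring
      _ ≤ ε * pinchKernel ρ z + C * (4 * (1 - ρ ^ 4)) :=
          add_le_add_right (mul_le_mul_of_nonneg_left (pinchKernel_mul_sq_le hρ0 hρ hz.le) hC) _
  calc ‖circleAverage (fun z => pinchKernel ρ z * φ z) 0 1 - c‖
      = ‖circleAverage (fun z => pinchKernel ρ z * φ z - c * (pinchKernel ρ z : ℂ)) 0 1‖ := by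
        rw [circleAverage_fun_sub hφ hKc, circleAverage_const_mul, havg, mul_one]
    _ ≤ circleAverage (fun z => ε * pinchKernel ρ z + C * (4 * (1 - ρ ^ 4))) 0 1 :=
        norm_circleAverage_le_of_norm_le (hε.add (circleIntegrable_const _ _ _)) hbound
    _ = ε + C * (4 * (1 - ρ ^ 4)) := by
        rw [circleAverage_fun_add hε (circleIntegrable_const _ _ _), circleAverage_const]
        simp_rw [← smul_eq_mul ε, circleAverage_fun_smul, circleAverage_pinchKernel hρ0 hρ]
        rw [smul_eq_mul, mul_one]

lemma tendsto_circleAverage_pinchKernel_mul {Φ : ℝ → ℂ → ℂ} {φ : ℂ → ℂ} {c : ℂ}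
    (hΦ : TendstoUniformlyOn Φ φ (𝓝[<] 1) (Metric.sphere 0 1))
    (hφ : ContinuousOn φ (Metric.sphere 0 1)) (hc : ∀ z, z ^ 2 = -1 → φ z = c)
    (hint : ∀ᶠ ρ in 𝓝[<] 1, CircleIntegrable (fun z => pinchKernel ρ z * Φ ρ z) 0 1) :
    Tendsto (fun ρ => circleAverage (fun z => pinchKernel ρ z * Φ ρ z) 0 1) (𝓝[<] 1) (𝓝 c) := by
  rw [Metric.tendsto_nhds]
  intro ε hε
  have hzero (z : ℂ) (hz : ‖1 + z ^ 2‖ ^ 2 = 0) : φ z - c = 0 := by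
    rw [sq_eq_zero_iff, norm_eq_zero, add_comm] at hz
    rw [hc z (eq_neg_of_add_eq_zero_left hz), sub_self]
  obtain ⟨C, hC0, hC⟩ := exists_norm_le_add_mul (g := fun z => ‖1 + z ^ 2‖ ^ 2)
    (isCompact_sphere (0 : ℂ) 1) (hφ.sub continuousOn_const) (by fun_prop)
    (fun z _ => by positivity) (fun z _ => hzero z) (by positivity : 0 < ε / 4)
  have hsmall : Tendsto (fun ρ : ℝ => C * (4 * (1 - ρ ^ 4))) (𝓝[<] 1) (𝓝 0) :=
    tendsto_nhdsWithin_of_tendsto_nhds (Continuous.tendsto' (by fun_prop) _ _ (by norm_num))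
  filter_upwards [hint, Ioo_mem_nhdsLT zero_lt_one, hsmall.eventually_lt_const (half_pos hε),
    Metric.tendstoUniformlyOn_iff.1 hΦ (ε / 4) (by positivity)] with ρ hint_ρ hρ hsmall_ρ hΦ_ρ
  rw [dist_eq_norm]
  refine (norm_circleAverage_pinchKernel_mul_sub_le (ε := ε / 2) hρ.1.le hρ.2 hC0 hint_ρ
    fun z hz => ?_).trans_lt (by linarith)
  rw [← mem_sphere_zero_iff_norm] at hz
  have hΦz := hΦ_ρ z hz
  have hφz : ‖φ z - c‖ ≤ ε / 4 + C * ‖1 + z ^ 2‖ ^ 2 := hC z hz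
  rw [dist_eq_norm_sub'] at hΦz
  linarith [norm_sub_le_norm_sub_add_norm_sub (Φ ρ z) (φ z) c]

end PinchKernel

section PinchedIntegral

/-- The factor `Γ(az; p, q) Γ(az⁻¹; p, q)` with its poles at `az = 1` and `az⁻¹ = 1` removed. -/
noncomputable def egammaRegPair (p q a z : ℂ) : ℂ := egammaReg p q (a * z) * egammaReg p q (a * z⁻¹)

lemma egammaRegPair_inv (p q a z : ℂ) : egammaRegPair p q a z⁻¹ = egammaRegPair p q a z := by
  rw [egammaRegPair, egammaRegPair, inv_inv, mul_comm]

/-- The elliptic beta integrand with the additional parameters `±I * ρ`, whose poles coalesce at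
`z = ±I` as `ρ → 1`, after removal of these poles. -/
noncomputable def pinchedIntegrand {ι : Type*} [Fintype ι] (p q : ℂ) (t : ι → ℂ) (ρ : ℝ) (z : ℂ) :
    ℂ :=
  egammaRegPair p q (-I * ρ) z * egammaRegPair p q (I * ρ) z * betaIntegrand p q t z

variable (hp : ‖p‖ < 1) (hq : ‖q‖ < 1)
include hp hq

lemma egammaPair_eq_egammaRegPair_div (a z : ℂ) :
    egammaPair p q a z = egammaRegPair p q a z / ((1 - a * z) * (1 - a * z⁻¹)) := by
  rw [egammaPair, egamma_eq_egammaReg_div hp hq, egamma_eq_egammaReg_div hp hq, egammaRegPair,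
    div_mul_div_comm]

lemma mul_betaIntegrand_cons_cons_eq_pinchKernel_mul {n : ℕ} (t : Fin n → ℂ) (ρ : ℝ) {z : ℂ}
    (hz : ‖z‖ = 1) :
    (1 - ρ ^ 4) * betaIntegrand p q (Fin.cons (-I * ρ) (Fin.cons (I * ρ) t) : Fin (n + 2) → ℂ) z =
      pinchKernel ρ z * pinchedIntegrand p q t ρ z := by
  have hsq (w : ℂ) : (1 - -I * ρ * w) * (1 - I * ρ * w) = 1 + ρ ^ 2 * w ^ 2 := by
    linear_combination -(ρ ^ 2 * w ^ 2) * I_sq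
  rw [ofReal_pinchKernel hz, ← hsq, ← hsq, pinchedIntegrand, betaIntegrand, betaIntegrand,
    Fin.prod_univ_succ, Fin.prod_univ_succ]
  simp only [Fin.cons_zero, Fin.cons_succ, egammaPair_eq_egammaRegPair_div hp hq (_ * (ρ : ℂ)),
    div_eq_mul_inv, mul_inv]
  ring

lemma pinchedIntegrand_one {ι : Type*} [Fintype ι] (t : ι → ℂ) {z : ℂ} (hz : z ^ 2 = -1) :
    pinchedIntegrand p q t 1 z = 4 * egammaReg p q 1 ^ 2 * ∏ i, egammaPair p q (t i) I := by
  have hweight : egammaReg p q (-1) ^ 2 * betaWeight p q z = 4 := by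
    rw [betaWeight, hz, inv_neg_one, theta_neg_one hp, theta_neg_one hq]
    have := egammaReg_mul_qpoch_of_inv_eq hp hq inv_neg_one (by simp)
    linear_combination 4 * (egammaReg p q (-1) * (qpoch (p * -1) p * qpoch (q * -1) q) + 1) * this
  have hpair (a : ℂ) : egammaPair p q a z = egammaPair p q a I ∧
      egammaRegPair p q a z = egammaRegPair p q a I := by
    rcases sq_eq_sq_iff_eq_or_eq_neg.1 (hz.trans I_sq.symm) with rfl | rfl
    · exact ⟨rfl, rfl⟩
    · rw [← Complex.inv_I]
      exact ⟨egammaPair_inv p q a I, egammaRegPair_inv p q a I⟩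
  simp only [pinchedIntegrand, betaIntegrand, hpair]
  simp only [egammaRegPair, ofReal_one, mul_one, neg_mul, I_mul_I, neg_neg,
    mul_inv_cancel₀ I_ne_zero]
  linear_combination egammaReg p q 1 ^ 2 * (∏ i, egammaPair p q (t i) I) * hweight

lemma continuousAt_uncurry_egammaRegPair {a : ℂ} (ha : ‖a‖ = 1) {z : ℂ} (hz : ‖z‖ = 1) :
    ContinuousAt (fun y : ℝ × ℂ => egammaRegPair p q (a * y.1) y.2) (1, z) := by
  have hz0 : z ≠ 0 := norm_pos_iff.1 (hz ▸ one_pos)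
  have hreg {x : ℝ × ℂ → ℂ} (hx : ContinuousAt x (1, z)) (hx1 : ‖x (1, z)‖ = 1) :
      ContinuousAt (fun y => egammaReg p q (x y)) (1, z) :=
    ContinuousAt.comp (g := egammaReg p q)
      (continuousAt_egammaReg hp hq (norm_ne_zero_iff.1 (by simp [hx1])) hx1.le) hx
  exact (hreg (x := fun y => a * y.1 * y.2) (by fun_prop) (by simp [ha, hz])).mul
    (hreg (x := fun y => a * y.1 * y.2⁻¹) (by fun_prop (disch := assumption)) (by simp [ha, hz]))

lemma continuousAt_uncurry_pinchedIntegrand {ι : Type*} [Fintype ι] {t : ℝ → ι → ℂ}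
    (ht : ContinuousAt t 1) (ht0 : ∀ i, t 1 i ≠ 0) (ht1 : ∀ i, ‖t 1 i‖ < 1) {z : ℂ}
    (hz : ‖z‖ = 1) :
    ContinuousAt (Function.uncurry fun ρ => pinchedIntegrand p q (t ρ) ρ) (1, z) := by
  have hβ : ContinuousAt (fun y : ℝ × ℂ => betaIntegrand p q (t y.1) y.2) (1, z) :=
    ContinuousAt.comp (g := Function.uncurry (betaIntegrand p q))
      (f := fun y : ℝ × ℂ => (t y.1, y.2))
      (differentiableAt_uncurry_betaIntegrand hp hq ht0 ht1 hz).continuousAt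
      ((ht.comp (x := (1, z)) continuousAt_fst).prodMk continuousAt_snd)
  exact ((continuousAt_uncurry_egammaRegPair hp hq (by simp) hz).mul
    (continuousAt_uncurry_egammaRegPair hp hq (by simp) hz)).mul hβ

lemma tendsto_mul_ellipticBeta_cons_cons {n : ℕ} {t : ℝ → Fin n → ℂ} (ht : ContinuousAt t 1)
    (ht0 : ∀ i, t 1 i ≠ 0) (ht1 : ∀ i, ‖t 1 i‖ < 1) :
    Tendsto (fun ρ : ℝ => (1 - ρ ^ 4) * ellipticBeta p q
        (Fin.cons (-I * ρ) (Fin.cons (I * ρ) (t ρ)) : Fin (n + 2) → ℂ)) (𝓝[<] 1)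
      (𝓝 (4 * egammaReg p q 1 ^ 2 * ∏ i, egammaPair p q (t 1 i) I)) := by
  have hcont (z : ℂ) (hz : z ∈ Metric.sphere 0 1) :=
    continuousAt_uncurry_pinchedIntegrand hp hq ht ht0 ht1 (mem_sphere_zero_iff_norm.1 hz)
  have hti (i : Fin n) : ∀ᶠ ρ in 𝓝 1, t ρ i ≠ 0 ∧ ‖t ρ i‖ < 1 :=
    have hi : ContinuousAt (fun ρ => t ρ i) 1 := continuousAt_pi.1 ht i
    (hi.eventually_ne (ht0 i)).and (hi.norm.eventually_lt_const (ht1 i))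
  have hsphere (ρ : ℝ) : Set.EqOn (fun z => pinchKernel ρ z * pinchedIntegrand p q (t ρ) ρ z)
      (fun z => (1 - (ρ : ℂ) ^ 4) * betaIntegrand p q
        (Fin.cons (-I * ρ) (Fin.cons (I * ρ) (t ρ)) : Fin (n + 2) → ℂ) z)
      (Metric.sphere 0 |1|) := fun z hz =>
    (mul_betaIntegrand_cons_cons_eq_pinchKernel_mul hp hq (t ρ) ρ (by simpa using hz)).symm
  have hlim := tendsto_circleAverage_pinchKernel_mul
    (Φ := fun ρ => pinchedIntegrand p q (t ρ) ρ)
    (fun U hU => nhdsWithin_le_nhds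
      (tendstoUniformlyOn_of_continuousAt_uncurry (isCompact_sphere 0 1) hcont U hU))
    (fun z hz => ((hcont z hz).comp (f := fun z => ((1 : ℝ), z))
      (by fun_prop)).continuousWithinAt)
    (fun z hz => by exact_mod_cast pinchedIntegrand_one hp hq (t 1) hz) ?_
  · refine hlim.congr fun ρ => ?_
    rw [circleAverage_congr_sphere (hsphere ρ), circleAverage_const_mul, ← ellipticBeta]
  · filter_upwards [Ioo_mem_nhdsLT one_pos, nhdsWithin_le_nhds (eventually_all.2 hti)] with ρ hρ hρt
    have hρ0 : (ρ : ℂ) ≠ 0 := ofReal_ne_zero.2 hρ.1.ne'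
    have hρI {a : ℂ} (ha : ‖a‖ = 1) : ‖a * ρ‖ < 1 := by simpa [ha, abs_of_pos hρ.1] using hρ.2
    rw [circleIntegrable_congr (hsphere ρ)]
    refine CircleIntegrable.const_smul (circleIntegrable_betaIntegrand hp hq ?_ ?_)
    · exact cons_ne_zero (by simp [hρ0]) (cons_ne_zero (by simp [hρ0]) fun i => (hρt i).1)
    · exact cons_norm_lt_one (hρI (by simp)) (cons_norm_lt_one (hρI (by simp)) fun i => (hρt i).2)

lemma mul_egammaProd_cons_cons {n : ℕ} (t : Fin n → ℂ) {ρ : ℝ} (hρ : (ρ : ℂ) ^ 2 ≠ 1) :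
    (1 - ρ ^ 2) * egammaProd p q (Fin.cons (-I * ρ) (Fin.cons (I * ρ) t) : Fin (n + 2) → ℂ) =
      egammaReg p q (ρ ^ 2) * (∏ i, egammaPair p q (ρ * t i) I) * egammaProd p q t := by
  have hsq : -I * ρ * (I * ρ) = (ρ : ℂ) ^ 2 := by linear_combination -(ρ : ℂ) ^ 2 * I_sq
  have hpair (i : Fin n) : egammaPair p q (ρ * t i) I =
      egamma (-I * ρ * t i) p q * egamma (I * ρ * t i) p q := by
    rw [egammaPair, Complex.inv_I, mul_comm (egamma _ p q)]
    congr 2 <;> ring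
  rw [egammaProd_cons, egammaProd_cons, Fin.prod_univ_succ, Fin.cons_zero, hsq]
  simp only [Fin.cons_succ, hpair, Finset.prod_mul_distrib]
  rw [egamma_eq_egammaReg_div hp hq (_ ^ 2)]
  field_simp [sub_ne_zero.2 hρ.symm]

lemma tendsto_mul_egammaProd_cons_cons {n : ℕ} {t : ℝ → Fin n → ℂ} (ht : ContinuousAt t 1)
    (ht0 : ∀ i, t 1 i ≠ 0) (ht1 : ∀ i, ‖t 1 i‖ < 1) :
    Tendsto (fun ρ : ℝ => (1 - ρ ^ 2) * egammaProd p q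
        (Fin.cons (-I * ρ) (Fin.cons (I * ρ) (t ρ)) : Fin (n + 2) → ℂ)) (𝓝[<] 1)
      (𝓝 (egammaReg p q 1 * (∏ i, egammaPair p q (t 1 i) I) * egammaProd p q (t 1))) := by
  have hreg : ContinuousAt (fun ρ : ℝ => egammaReg p q (ρ ^ 2)) 1 :=
    ContinuousAt.comp (g := egammaReg p q) (continuousAt_egammaReg hp hq (by simp) (by simp))
      (by fun_prop)
  have hpair (i : Fin n) : ContinuousAt (fun ρ : ℝ => egammaPair p q (ρ * t ρ i) I) 1 := by
    refine ContinuousAt.comp (g := Function.uncurry (egammaPair p q))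
      (f := fun ρ : ℝ => (ρ * t ρ i, I)) ?_
      ((continuous_ofReal.continuousAt.mul (continuousAt_pi.1 ht i)).prodMk continuousAt_const)
    rw [ofReal_one, one_mul]
    exact (differentiableAt_uncurry_egammaPair hp hq (ht0 i) (ht1 i) norm_I).continuousAt
  have hpairs : ContinuousAt (fun ρ : ℝ => ∏ i, egammaPair p q (ρ * t ρ i) I) 1 :=
    tendsto_finsetProd Finset.univ fun i _ => hpair i
  have hprod : ContinuousAt (fun ρ => egammaProd p q (t ρ)) 1 :=
    (differentiableAt_egammaProd hp hq ht0 ht1).continuousAt.comp ht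
  have hlim : Tendsto (fun ρ : ℝ => egammaReg p q (ρ ^ 2) * (∏ i, egammaPair p q (ρ * t ρ i) I) *
      egammaProd p q (t ρ)) (𝓝[<] 1) _ := tendsto_nhdsWithin_of_tendsto_nhds
    ((hreg.mul hpairs).mul hprod).tendsto
  rw [show egammaReg p q 1 * (∏ i, egammaPair p q (t 1 i) I) * egammaProd p q (t 1) =
    egammaReg p q ((1 : ℝ) ^ 2) * (∏ i, egammaPair p q ((1 : ℝ) * t 1 i) I) * egammaProd p q (t 1)
    by simp]
  refine hlim.congr' ?_
  filter_upwards [Ioo_mem_nhdsLT one_pos] with ρ hρ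
  refine (mul_egammaProd_cons_cons hp hq (t ρ) ?_).symm
  exact_mod_cast (pow_lt_one₀ hρ.1.le hρ.2 two_ne_zero).ne

end PinchedIntegral

section

variable (hp : ‖p‖ < 1) (hp0 : p ≠ 0) (hq : ‖q‖ < 1) (hq0 : q ≠ 0)
include hp hp0 hq hq0

lemma IsBalanced.egammaPair_ne_zero {ι : Type*} [Fintype ι] [Nontrivial ι] {t : ι → ℂ}
    (ht : IsBalanced p q t) (i : ι) {z : ℂ} (hz : ‖z‖ = 1) : egammaPair p q (t i) z ≠ 0 := by
  have hlt : ‖p * q‖ < ‖t i‖ := by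
    simpa using ht.norm_mul_lt_norm_prod hp0 hq0 (s := {i}) (Finset.singleton_ne_univ i)
  have hne {w : ℂ} (hw : ‖w‖ = 1) : egamma (t i * w) p q ≠ 0 := by
    have hnorm : ‖t i * w‖ = ‖t i‖ := by rw [norm_mul, hw, mul_one]
    exact egamma_ne_zero hp hq (hnorm ▸ ht.norm_lt_one i) (hnorm ▸ hlt)
  exact mul_ne_zero (hne hz) (hne (by rw [norm_inv, hz, inv_one]))

/-- The reflection formula pairs `Γ(tᵢtⱼ)` with `Γ(tₖtₗ)` for `{i, j, k, l} = {0, 1, 2, 3}`. -/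
lemma IsBalanced.egammaProd_eq_one {t : Fin 4 → ℂ} (ht : IsBalanced p q t) :
    egammaProd p q t = 1 := by
  have h0 := ht.ne_zero hp0 hq0
  have h1 := ht.norm_lt_one
  have hprod : t 0 * t 1 * t 2 * t 3 = p * q := by rw [← ht.prod_eq, Fin.prod_univ_four]
  have hrefl {i j k l : Fin 4} (h : t i * t j * (t k * t l) = p * q) :
      egamma (t i * t j) p q * egamma (t k * t l) p q = 1 :=
    egamma_mul_egamma_of_mul_eq hp hq (norm_mul_lt_one (h1 i) (h1 j).le)
      (norm_mul_lt_one (h1 k) (h1 l).le) (mul_ne_zero (h0 i) (h0 j)) (mul_ne_zero (h0 k) (h0 l)) h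
  have h₁ := hrefl (i := 0) (j := 1) (k := 2) (l := 3) (by rw [← hprod]; ring)
  have h₂ := hrefl (i := 0) (j := 2) (k := 1) (l := 3) (by rw [← hprod]; ring)
  have h₃ := hrefl (i := 0) (j := 3) (k := 1) (l := 2) (by rw [← hprod]; ring)
  calc egammaProd p q t
      = egamma (t 0 * t 1) p q * egamma (t 2 * t 3) p q *
          (egamma (t 0 * t 2) p q * egamma (t 1 * t 3) p q) *
          (egamma (t 0 * t 3) p q * egamma (t 1 * t 2) p q) := by
        simp [egammaProd, Fin.prod_univ_succ, Fin.prod_Ioi_succ]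
        ring
    _ = 1 := by rw [h₁, h₂, h₃, one_mul, one_mul]

lemma tendsto_betaRatio_cons_cons {t : ℝ → Fin 4 → ℂ} (ht : ContinuousAt t 1)
    (hbal : IsBalanced p q (t 1)) :
    Tendsto (fun ρ : ℝ => betaRatio p q
        (Fin.cons (-I * ρ) (Fin.cons (I * ρ) (t ρ)) : Fin 6 → ℂ)) (𝓝[<] 1)
      (𝓝 (2 * egammaReg p q 1)) := by
  have ht0 := hbal.ne_zero hp0 hq0
  set P := ∏ i, egammaPair p q (t 1 i) I
  have hP : P ≠ 0 :=
    Finset.prod_ne_zero_iff.2 fun i _ => hbal.egammaPair_ne_zero hp hp0 hq hq0 i norm_I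
  have hG : egammaReg p q 1 ≠ 0 :=
    left_ne_zero_of_mul_eq_one (egammaReg_mul_qpoch_of_inv_eq hp hq inv_one (by simp))
  have hnum := tendsto_mul_ellipticBeta_cons_cons hp hq ht ht0 hbal.norm_lt_one
  have hden := tendsto_mul_egammaProd_cons_cons hp hq ht ht0 hbal.norm_lt_one
  rw [hbal.egammaProd_eq_one hp hp0 hq hq0, mul_one] at hden
  have htwo : Tendsto (fun ρ : ℝ => (1 : ℂ) + ρ ^ 2) (𝓝[<] 1) (𝓝 2) :=
    tendsto_nhdsWithin_of_tendsto_nhds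
      (Continuous.tendsto' (by fun_prop) _ _ (by norm_num))
  have hlim := hnum.div (htwo.mul hden) (mul_ne_zero two_ne_zero (mul_ne_zero hG hP))
  rw [show 4 * egammaReg p q 1 ^ 2 * P / (2 * (egammaReg p q 1 * P)) = 2 * egammaReg p q 1 by
    field_simp; norm_num] at hlim
  refine hlim.congr' ?_
  filter_upwards [Ioo_mem_nhdsLT one_pos] with ρ hρ
  have hρ4 : (1 : ℂ) - ρ ^ 4 ≠ 0 := sub_ne_zero.2 <| by
    exact_mod_cast (pow_lt_one₀ hρ.1.le hρ.2 four_ne_zero).ne'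
  simp only [Pi.div_apply]
  rw [betaRatio, ← mul_assoc, show (1 + (ρ : ℂ) ^ 2) * (1 - ρ ^ 2) = 1 - ρ ^ 4 by ring,
    mul_div_mul_left _ _ hρ4]

/-- Three moves along the lines `ab = const` turn the first three parameters into
`(-I * ρ, I * ρ, abc / ρ ^ 2)`. -/
lemma betaRatio_eq_betaRatio_pinched {a b c : ℂ} {t : Fin 3 → ℂ}
    (h : IsBalanced p q (Fin.cons a (Fin.cons b (Fin.cons c t)) : Fin 6 → ℂ))
    (hab : ‖a * b‖ < ‖q‖) {ρ : ℝ} (hqρ : ‖q‖ ≤ ρ) (hcρ : ‖c‖ ≤ ρ) (hρ : ρ < 1) :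
    betaRatio p q (Fin.cons a (Fin.cons b (Fin.cons c t)) : Fin 6 → ℂ) =
      betaRatio p q (Fin.cons (-I * ρ) (Fin.cons (I * ρ)
        (Fin.cons (a * b * c / ρ ^ 2) t)) : Fin 6 → ℂ) := by
  have hρ_pos : 0 < ρ := (norm_pos_iff.2 hq0).trans_le hqρ
  have hρ0 : (ρ : ℂ) ≠ 0 := ofReal_ne_zero.2 hρ_pos.ne'
  have hc : ‖c‖ < 1 := h.norm_lt_one 2
  have ht (i : Fin 3) : ‖t i‖ < 1 := h.norm_lt_one i.succ.succ.succ
  have hnorm {x : ℂ} (hx : ‖x‖ = 1) : ‖x * ρ‖ = ρ := by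
    rw [norm_mul, hx, one_mul, Complex.norm_real, Real.norm_of_nonneg hρ_pos.le]
  have hIρ : ‖I * ρ‖ < 1 := (hnorm norm_I).trans_lt hρ
  have hIρ' : ‖-I * ρ‖ < 1 := (hnorm (by simp)).trans_lt hρ
  have habρ : ‖a * b / (I * ρ)‖ < 1 := by
    rw [norm_div, hnorm norm_I, div_lt_one hρ_pos]
    exact hab.trans_le hqρ
  have hlt : ‖a * b * c‖ < ‖q‖ * ρ := by
    rw [norm_mul]
    exact (mul_le_mul_of_nonneg_left hcρ (norm_nonneg _)).trans_lt
      (mul_lt_mul_of_pos_right hab hρ_pos)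
  have hXc : ‖a * b / (I * ρ) * c‖ < ‖q‖ := by
    rwa [div_mul_eq_mul_div, norm_div, hnorm norm_I, div_lt_iff₀ hρ_pos]
  have hA : ‖a * b * c / ρ ^ 2‖ < 1 := by
    rw [norm_div, norm_pow, Complex.norm_real, Real.norm_of_nonneg hρ_pos.le,
      div_lt_one (by positivity), sq]
    exact hlt.trans_le (mul_le_mul_of_nonneg_right hqρ hρ_pos.le)
  have hbal : IsBalanced p q
      (Fin.cons (a * b / (I * ρ)) (Fin.cons c (Fin.cons (I * ρ) t)) : Fin 6 → ℂ) := by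
    refine ⟨cons_norm_lt_one habρ (cons_norm_lt_one hc (cons_norm_lt_one hIρ ht)), ?_⟩
    rw [← h.prod_eq]
    simp only [Fin.prod_cons]
    field_simp
  rw [betaRatio_eq_of_mul_eq hp hp0 hq hq0 h habρ hIρ (by field_simp) hab,
    betaRatio_cons_cons_cons_swap, betaRatio_eq_of_mul_eq hp hp0 hq hq0 hbal hIρ' hA ?_ hXc,
    betaRatio_cons_cons_cons_swap]
  field_simp
  linear_combination a * b * c * I_sq

lemma betaRatio_eq_of_norm_mul_lt {t : Fin 6 → ℂ} (ht : IsBalanced p q t)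
    (hlt : ‖t 0 * t 1‖ < ‖q‖) : betaRatio p q t = 2 * egammaReg p q 1 := by
  induction t using Fin.consCases with | _ a t
  induction t using Fin.consCases with | _ b t
  induction t using Fin.consCases with | _ c t
  have ha : ‖a‖ < 1 := ht.norm_lt_one 0
  have hb : ‖b‖ < 1 := ht.norm_lt_one 1
  have hc : ‖c‖ < 1 := ht.norm_lt_one 2
  have hcont : ContinuousAt (fun ρ : ℝ => (Fin.cons (a * b * c / ρ ^ 2) t : Fin 4 → ℂ)) 1 := by
    refine continuousAt_pi.2 (Fin.cases ?_ fun i => continuousAt_const)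
    exact continuousAt_const.div (by fun_prop) (by simp)
  have hbal : IsBalanced p q (Fin.cons (a * b * c / (1 : ℝ) ^ 2) t : Fin 4 → ℂ) := by
    rw [ofReal_one, one_pow, div_one]
    refine ⟨cons_norm_lt_one (norm_mul_lt_one (norm_mul_lt_one ha hb.le) hc.le)
      fun i => ht.norm_lt_one i.succ.succ.succ, ?_⟩
    rw [← ht.prod_eq]
    simp only [Fin.prod_cons, mul_assoc]
  refine tendsto_nhds_unique (tendsto_const_nhds.congr' ?_)
    (tendsto_betaRatio_cons_cons hp hp0 hq hq0 hcont hbal)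
  filter_upwards [Ico_mem_nhdsLT (max_lt hq hc)] with ρ hρ
  exact betaRatio_eq_betaRatio_pinched hp hp0 hq hq0 ht hlt ((le_max_left _ _).trans hρ.1)
    ((le_max_right _ _).trans hρ.1) hρ.2

end

/-! ### Analytic continuation in the parameters -/

lemma isBalanced_exp_iff {ι : Type*} [Fintype ι] {v : ι → ℂ} :
    IsBalanced p q (fun i => Complex.exp (v i)) ↔
      (∀ i, (v i).re < 0) ∧ Complex.exp (∑ i, v i) = p * q := by
  have hnorm (i : ι) : ‖Complex.exp (v i)‖ < 1 ↔ (v i).re < 0 := by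
    rw [Complex.norm_exp, Real.exp_lt_one_iff]
  refine ⟨fun h => ⟨fun i => (hnorm i).1 (h.norm_lt_one i), ?_⟩,
    fun h => ⟨fun i => (hnorm i).2 (h.1 i), ?_⟩⟩
  · rw [Complex.exp_sum, h.prod_eq]
  · rw [← Complex.exp_sum, h.2]

section

variable (hp : ‖p‖ < 1) (hp0 : p ≠ 0) (hq : ‖q‖ < 1) (hq0 : q ≠ 0)
include hp hp0 hq hq0

lemma betaRatio_exp_eq_of_eventually {n : ℕ} (hn : 2 < n) {v w : Fin n → ℂ} {C : ℂ}
    (hv : IsBalanced p q fun i => Complex.exp (v i))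
    (hw : IsBalanced p q fun i => Complex.exp (w i)) (hvw : ∑ i, v i = ∑ i, w i)
    (hC : ∀ᶠ x in 𝓝 v, IsBalanced p q (fun i => Complex.exp (x i)) →
      betaRatio p q (fun i => Complex.exp (x i)) = C) :
    betaRatio p q (fun i => Complex.exp (w i)) = C := by
  set γ : ℂ → Fin n → ℂ := fun l => v + l • (w - v) with hγ
  have hγ_diff : Differentiable ℂ γ := by fun_prop
  have hγ0 : γ 0 = v := by simp [hγ]
  have hγ1 : γ 1 = w := by simp [hγ]
  set H : Set (Fin n → ℂ) := Set.univ.pi fun _ => {z : ℂ | z.re < 0}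
  have hH : IsOpen (γ ⁻¹' H) :=
    (isOpen_set_pi Set.finite_univ fun _ _ => isOpen_lt Complex.continuous_re
      continuous_const).preimage hγ_diff.continuous
  have hconvex : Convex ℝ (γ ⁻¹' H) :=
    ((convex_pi fun _ _ => convex_halfSpace_re_lt 0).translate_preimage_right v).linear_preimage
      ((LinearMap.toSpanSingleton ℂ _ (w - v)).restrictScalars ℝ)
  have hbal (l : ℂ) (hl : l ∈ γ ⁻¹' H) : IsBalanced p q fun i => Complex.exp (γ l i) := by
    refine isBalanced_exp_iff.2 ⟨fun i => hl i trivial, ?_⟩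
    rw [← (isBalanced_exp_iff.1 hv).2]
    simp [hγ, Finset.sum_add_distrib, ← Finset.mul_sum, hvw]
  have hdiff : DifferentiableOn ℂ (fun l => betaRatio p q fun i => Complex.exp (γ l i))
      (γ ⁻¹' H) := by
    refine differentiableOn_betaRatio_comp hp hp0 hq hq0 hn hH ?_ hbal
    exact Differentiable.differentiableOn (by fun_prop)
  have hmem {l : ℂ} (hl : IsBalanced p q fun i => Complex.exp (γ l i)) : l ∈ γ ⁻¹' H :=
    fun i _ => (isBalanced_exp_iff.1 hl).1 i
  have h0 : (0 : ℂ) ∈ γ ⁻¹' H := hmem (by rwa [hγ0])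
  have h1 : (1 : ℂ) ∈ γ ⁻¹' H := hmem (by rwa [hγ1])
  have hnear : ∀ᶠ l in 𝓝 0, betaRatio p q (fun i => Complex.exp (γ l i)) = C := by
    rw [← hγ0] at hC
    filter_upwards [hγ_diff.continuous.continuousAt.eventually hC, hH.mem_nhds h0]
      with l hl hlH using hl (hbal l hlH)
  have := (hdiff.analyticOnNhd hH).eqOn_of_preconnected_of_eventuallyEq
    analyticOnNhd_const hconvex.isPreconnected h0 hnear h1
  simpa only [hγ1] using this

lemma exists_isBalanced_exp_and_norm_mul_lt {c : ℂ} (hc : Complex.exp c = p * q) :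
    ∃ v : Fin 6 → ℂ, IsBalanced p q (fun i => Complex.exp (v i)) ∧ ∑ i, v i = c ∧
      ‖Complex.exp (v 0) * Complex.exp (v 1)‖ < ‖q‖ := by
  have hlog_p : Real.log ‖p‖ < 0 := Real.log_neg (norm_pos_iff.2 hp0) hp
  have hlog_q : Real.log ‖q‖ < 0 := Real.log_neg (norm_pos_iff.2 hq0) hq
  have hc_re : c.re = Real.log ‖p‖ + Real.log ‖q‖ := by
    rw [← Real.log_exp c.re, ← Complex.norm_exp, hc, norm_mul,
      Real.log_mul (norm_ne_zero_iff.2 hp0) (norm_ne_zero_iff.2 hq0)]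
  set σ : ℝ := Real.log ‖p‖ / 5 with hσ
  set μ : ℂ := (c - (4 * σ : ℝ)) / 2 with hμ
  have hμ_re : μ.re = (σ + Real.log ‖q‖) / 2 := by
    rw [hμ, Complex.div_ofNat_re, Complex.sub_re, hc_re, Complex.ofReal_re, hσ]
    ring
  have hsum : ∑ i, (![μ, μ, σ, σ, σ, σ] : Fin 6 → ℂ) i = c := by
    simp only [Fin.sum_univ_succ, Fin.sum_univ_zero, Matrix.cons_val_zero, Matrix.cons_val_succ]
    rw [hμ]
    push_cast
    ring
  refine ⟨![μ, μ, σ, σ, σ, σ], isBalanced_exp_iff.2 ⟨?_, by rw [hsum, hc]⟩, hsum, ?_⟩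
  · have hμ_neg : μ.re < 0 := by linarith
    have hσ_neg : (σ : ℂ).re < 0 := by
      rw [Complex.ofReal_re]
      linarith
    intro i
    fin_cases i <;> assumption
  · change ‖Complex.exp μ * Complex.exp μ‖ < ‖q‖
    rw [← Complex.exp_add, Complex.norm_exp, ← Real.lt_log_iff_exp_lt (norm_pos_iff.2 hq0),
      Complex.add_re, hμ_re]
    linarith

/-- The elliptic beta integral of Spiridonov. -/
theorem ellipticBeta_eq {t : Fin 6 → ℂ} (ht : IsBalanced p q t) :
    ellipticBeta p q t = 2 * egammaReg p q 1 * egammaProd p q t := by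
  rw [← div_eq_iff (ht.egammaProd_ne_zero hp hp0 hq hq0 (by norm_num)), ← betaRatio]
  set w : Fin 6 → ℂ := fun i => Complex.log (t i)
  have hw : (fun i => Complex.exp (w i)) = t :=
    funext fun i => Complex.exp_log (ht.ne_zero hp0 hq0 i)
  rw [← hw] at ht ⊢
  obtain ⟨v, hv, hvw, hlt⟩ :=
    exists_isBalanced_exp_and_norm_mul_lt hp hp0 hq hq0 (isBalanced_exp_iff.1 ht).2
  refine betaRatio_exp_eq_of_eventually hp hp0 hq hq0 (by norm_num) hv ht hvw ?_
  have hcont : Continuous fun x : Fin 6 → ℂ => ‖Complex.exp (x 0) * Complex.exp (x 1)‖ := by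
    fun_prop
  filter_upwards [hcont.continuousAt.eventually_lt_const hlt] with x hx hbal
  exact betaRatio_eq_of_norm_mul_lt hp hp0 hq hq0 hbal hx

end

/-! ### The star-triangle relation -/

lemma kappa_mul_intervalIntegral_mul_I (p q : ℂ) (f : ℂ → ℂ) :
    kappa p q * ∫ u in (0 : ℝ)..2 * π, f (Complex.exp (u * I)) * I =
      qpoch p p * qpoch q q / 2 * circleAverage f 0 1 := by
  rw [intervalIntegral.integral_mul_const, circleAverage_def, kappa, Complex.real_smul]
  simp only [circleMap, ofReal_one, one_mul, zero_add]
  have hπ : (π : ℂ) ≠ 0 := ofReal_ne_zero.2 pi_ne_zero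
  push_cast
  field_simp
  ring

lemma gamma4_comm (p q a u v : ℂ) : gamma4 p q a u v = gamma4 p q a v u := by
  simp only [gamma4, mul_right_comm a v, mul_right_comm a v⁻¹]
  ring

lemma gamma4_eq_egammaPair_mul_egammaPair (p q a u z : ℂ) :
    gamma4 p q a u z = egammaPair p q (a * u) z * egammaPair p q (a * u⁻¹) z := by
  rw [gamma4, egammaPair, egammaPair, mul_assoc]

lemma egammaProd_eq_mul_gamma4 (p q a b c : ℂ) {u v w : ℂ} (hu : u ≠ 0) (hv : v ≠ 0)
    (hw : w ≠ 0) :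
    egammaProd p q ![a * u, a * u⁻¹, b * v, b * v⁻¹, c * w, c * w⁻¹] =
      egamma (a ^ 2) p q * egamma (b ^ 2) p q * egamma (c ^ 2) p q * gamma4 p q (a * b) u v *
        gamma4 p q (a * c) u w * gamma4 p q (b * c) v w := by
  have hsq (a : ℂ) {u : ℂ} (hu : u ≠ 0) : a * u * (a * u⁻¹) = a ^ 2 := by field_simp
  have hcross (a b u v : ℂ) : a * u * (b * v) = a * b * u * v := by ring
  simp only [Matrix.vecCons, egammaProd_cons, Fin.prod_univ_succ, Fin.cons_zero, Fin.cons_succ,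
    Fin.prod_univ_zero, gamma4, hsq _ hu, hsq _ hv, hsq _ hw, hcross]
  simp [egammaProd]
  ring

lemma norm_sq_lt_one_of_norm_mul_lt_one {a u : ℂ} (hu : u ≠ 0) (h : ‖a * u‖ < 1)
    (h' : ‖a * u⁻¹‖ < 1) : ‖a ^ 2‖ < 1 := by
  convert norm_mul_lt_one h h'.le using 2
  field_simp

section

variable (hp : ‖p‖ < 1) (hq : ‖q‖ < 1)
include hp hq

lemma qpoch_mul_qpoch_mul_ellipticBeta (hp0 : p ≠ 0) (hq0 : q ≠ 0) {t : Fin 6 → ℂ}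
    (ht : IsBalanced p q t) :
    qpoch p p * qpoch q q / 2 * ellipticBeta p q t = egammaProd p q t := by
  have hone := egammaReg_mul_qpoch_of_inv_eq hp hq inv_one (by rw [norm_one])
  rw [mul_one, mul_one] at hone
  rw [ellipticBeta_eq hp hp0 hq hq0 ht]
  linear_combination egammaProd p q t * hone

lemma gamma4_mul_gamma4_mul_gamma4_div (a b c u v w : ℂ) {z : ℂ} (hz : ‖z‖ = 1) :
    gamma4 p q a u z * gamma4 p q b v z * gamma4 p q c z w /
        (egamma (z ^ 2) p q * egamma (z ^ 2)⁻¹ p q) =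
      betaIntegrand p q ![a * u, a * u⁻¹, b * v, b * v⁻¹, c * w, c * w⁻¹] z := by
  rw [div_eq_mul_inv, inv_egamma_sq_mul_egamma_inv_sq hp hq hz, betaIntegrand, gamma4_comm p q c,
    gamma4_eq_egammaPair_mul_egammaPair, gamma4_eq_egammaPair_mul_egammaPair,
    gamma4_eq_egammaPair_mul_egammaPair]
  simp only [Fin.prod_univ_six, Matrix.cons_val]
  ring

lemma kappa_mul_integral_gamma4 (hp0 : p ≠ 0) (hq0 : q ≠ 0) {a b c u v w : ℂ} (hu : u ≠ 0)
    (hv : v ≠ 0) (hw : w ≠ 0)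
    (h : IsBalanced p q ![a * u, a * u⁻¹, b * v, b * v⁻¹, c * w, c * w⁻¹]) :
    (kappa p q * ∫ x in (0 : ℝ)..2 * π,
        gamma4 p q a u (Complex.exp (x * I)) * gamma4 p q b v (Complex.exp (x * I)) *
          gamma4 p q c (Complex.exp (x * I)) w /
          (egamma (Complex.exp (x * I) ^ 2) p q * egamma (Complex.exp (x * I) ^ 2)⁻¹ p q) * I) =
      egamma (a ^ 2) p q * egamma (b ^ 2) p q * egamma (c ^ 2) p q * gamma4 p q (a * b) u v *
        gamma4 p q (a * c) u w * gamma4 p q (b * c) v w := by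
  simp only [gamma4_mul_gamma4_mul_gamma4_div hp hq a b c u v w (norm_exp_ofReal_mul_I _)]
  rw [kappa_mul_intervalIntegral_mul_I, ← ellipticBeta,
    qpoch_mul_qpoch_mul_ellipticBeta hp hq hp0 hq0 h, egammaProd_eq_mul_gamma4 p q a b c hu hv hw]

end

end

theorem star_triangle_kernel (p q r : ℂ) (hp0 : 0 < ‖p‖) (hp1 : ‖p‖ < 1)
    (hq0 : 0 < ‖q‖) (hq1 : ‖q‖ < 1) (hr : r ^ 2 = p * q)
    (s t y w z : ℂ) (hs : s ≠ 0) (ht : t ≠ 0) (hy : y ≠ 0) (hw : w ≠ 0) (hz : z ≠ 0)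
    (h1 : ‖s * w‖ < 1) (h2 : ‖s * w⁻¹‖ < 1) (h3 : ‖t * z‖ < 1) (h4 : ‖t * z⁻¹‖ < 1)
    (h5 : ‖r * (s * t)⁻¹ * y‖ < 1) (h6 : ‖r * (s * t)⁻¹ * y⁻¹‖ < 1) :
    (kappa p q * ∫ u in (0:ℝ)..(2 * Real.pi),
        gamma4 p q s w (Complex.exp (u * Complex.I)) *
          gamma4 p q (r * (s * t)⁻¹) y (Complex.exp (u * Complex.I)) *
          gamma4 p q t (Complex.exp (u * Complex.I)) z /
          (egamma (Complex.exp (u * Complex.I) ^ 2) p q *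
            egamma ((Complex.exp (u * Complex.I) ^ 2)⁻¹) p q) * Complex.I)
      = egamma (s ^ 2) p q * egamma (t ^ 2) p q / egamma (s ^ 2 * t ^ 2) p q *
          Dfun p q r t y w * gamma4 p q (s * t) w z * Dfun p q r s y z := by
  have hp : p ≠ 0 := norm_pos_iff.1 hp0
  have hq : q ≠ 0 := norm_pos_iff.1 hq0
  set k := r * (s * t)⁻¹ with hk
  have hsk : s * k = r * t⁻¹ := by rw [hk]; field_simp
  have hkt : k * t = r * s⁻¹ := by rw [hk]; field_simp
  have hk_sq : s ^ 2 * t ^ 2 * k ^ 2 = p * q := by rw [← hr, hk]; field_simp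
  have hbal : IsBalanced p q ![s * w, s * w⁻¹, k * y, k * y⁻¹, t * z, t * z⁻¹] := by
    refine ⟨fun i => by fin_cases i <;> assumption, ?_⟩
    rw [← hk_sq, Fin.prod_univ_six]
    simp only [Matrix.cons_val]
    field_simp
  have hrefl : egamma (s ^ 2 * t ^ 2) p q * egamma (k ^ 2) p q = 1 :=
    egamma_mul_egamma_of_mul_eq hp1 hq1
      (norm_mul_lt_one (norm_sq_lt_one_of_norm_mul_lt_one hw h1 h2)
        (norm_sq_lt_one_of_norm_mul_lt_one hz h3 h4).le)
      (norm_sq_lt_one_of_norm_mul_lt_one hy h5 h6)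
      (left_ne_zero_of_mul (hk_sq ▸ mul_ne_zero hp hq))
      (right_ne_zero_of_mul (hk_sq ▸ mul_ne_zero hp hq)) hk_sq
  rw [kappa_mul_integral_gamma4 hp1 hq1 hp hq hw hy hz hbal, hsk, hkt, gamma4_comm p q _ w y,
    div_eq_mul_inv, ← eq_inv_of_mul_eq_one_right hrefl]
  simp only [gamma4, Dfun]
  ring
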